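/- There exist constants C > 0 and Θ₀ ∈ (0,π) such that for every Θ ∈ (0,Θ₀): if β ∈ ℝ and u : ℝ³ → ℝ is continuous, nonnegative, not identically zero, u = 0 on ℝ³∖V, u is harmonic on V, and u(rx) = r^β·u(x) for all r > 0 and x ∈ ℝ³∖{0}, then |β - 1 + Θ²/4| ≤ C·Θ³·|log Θ|. -/

import Mathlib

open MeasureTheory Metric Real Set Filter RealInnerProductSpace
open scoped ENNReal

noncomputable section

/-- Euclidean space ℝ^d. -/
abbrev Ed (d : ℕ) := EuclideanSpace ℝ (Fin d)

/-- The constant `A_{d,α}`. -/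
noncomputable def fracConst (d : ℕ) (α : ℝ) : ℝ :=
  α * 2 ^ (α - 1) * π ^ (-(d : ℝ) / 2) * Real.Gamma (((d : ℝ) + α) / 2) / Real.Gamma (1 - α / 2)

/-- The fractional Laplacian `Δ^{α/2} Φ (x)` exists and equals `L`. -/
def fracLapAt (d : ℕ) (α : ℝ) (Φ : Ed d → ℝ) (x : Ed d) (L : ℝ) : Prop :=
  Filter.Tendsto
    (fun ε : ℝ => fracConst d α *
      ∫ y in {y : Ed d | ε < ‖y - x‖}, (Φ y - Φ x) * ‖y - x‖ ^ (-(d : ℝ) - α))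
    (nhdsWithin 0 (Set.Ioi 0)) (nhds L)

/-- The last coordinate of a vector in ℝ^d. -/
def lastCoord (d : ℕ) (x : Ed d) : ℝ :=
  if h : 0 < d then x ⟨d - 1, Nat.sub_lt h Nat.one_pos⟩ else 0

/-- The unit vector `e_d = (0,…,0,1)`. -/
def eLast (d : ℕ) : Ed d :=
  if h : 0 < d then EuclideanSpace.single ⟨d - 1, Nat.sub_lt h Nat.one_pos⟩ (1 : ℝ) else 0

/-- The right circular cone `Γ_Θ` of angle `Θ`. -/
def cone (d : ℕ) (Θ : ℝ) : Set (Ed d) := {x | ‖x‖ * Real.cos Θ < lastCoord d x}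

/-- The unit sphere `S^{d-1}` in ℝ^d. -/
def unitSphere (d : ℕ) : Set (Ed d) := Metric.sphere (0 : Ed d) 1

/-- The spherical cap `B_Θ`. -/
def capB (d : ℕ) (Θ : ℝ) : Set (Ed d) := {θ | θ ∈ unitSphere d ∧ Real.cos Θ < lastCoord d θ}

/-- The surface measure `σ`: the (d-1)-dimensional Hausdorff measure. -/
noncomputable def sphMeasure (d : ℕ) : Measure (Ed d) := μH[(d : ℝ) - 1]

/-- The kernel `u_λ(t)`. -/
noncomputable def uKernel (d : ℕ) (α lam t : ℝ) : ℝ :=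
  ∫ r in Set.Ioi (0 : ℝ), r ^ ((d : ℝ) + lam - 1) * (r ^ 2 - 2 * r * t + 1) ^ (-((d : ℝ) + α) / 2)

/-- The kernel `u_λ(t)` as a value in `[0,∞]`. -/
noncomputable def uKernelE (d : ℕ) (α lam t : ℝ) : ℝ≥0∞ :=
  ∫⁻ r in Set.Ioi (0 : ℝ),
    ENNReal.ofReal (r ^ ((d : ℝ) + lam - 1) * (r ^ 2 - 2 * r * t + 1) ^ (-((d : ℝ) + α) / 2))

/-- The spherical fractional Laplacian `Δ_S^{α/2} φ (η)` exists and equals `L`. -/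
def sphFracLapAt (d : ℕ) (α : ℝ) (φ : Ed d → ℝ) (η : Ed d) (L : ℝ) : Prop :=
  Filter.Tendsto
    (fun ε : ℝ => fracConst d α *
      ∫ θ in {θ : Ed d | θ ∈ unitSphere d ∧ ⟪θ, η⟫ ≤ Real.cos ε},
        (φ θ - φ η) * uKernel d α 0 ⟪θ, η⟫ ∂(sphMeasure d))
    (nhdsWithin 0 (Set.Ioi 0)) (nhds L)

/-- The integrand of the radial operator `R_λ`. -/
noncomputable def RopIntegrand (d : ℕ) (α lam : ℝ) (φ : Ed d → ℝ) (η θ : Ed d) : ℝ :=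
  φ θ * (uKernel d α lam ⟪θ, η⟫ - uKernel d α 0 ⟪θ, η⟫)

/-- The radial operator `R_λ φ (η)`. -/
noncomputable def Rop (d : ℕ) (α lam : ℝ) (φ : Ed d → ℝ) (η : Ed d) : ℝ :=
  fracConst d α * ∫ θ in unitSphere d, RopIntegrand d α lam φ η θ ∂(sphMeasure d)

/-- The modulus `ω`. -/
noncomputable def omegaFn (α Θ : ℝ) : ℝ :=
  if α < 1 then Θ ^ α else if α = 1 then Θ * |Real.log Θ| else Θ

/-- The Euler beta function. -/
noncomputable def eulerBeta (a b : ℝ) : ℝ := Real.Gamma a * Real.Gamma b / Real.Gamma (a + b)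

/-- The constant `B_{d,α}`. -/
noncomputable def Bconst (d : ℕ) (α : ℝ) : ℝ :=
  Real.Gamma (((d : ℝ) + α) / 2) / (π ^ ((3 : ℝ) / 2) * Real.Gamma (((d : ℝ) - 1 + α) / 2)) *
    Real.sin (π * α / 2) * eulerBeta (1 + α / 2) (((d : ℝ) - 1) / 2)

/-- The constant `C_{d-1,α}`. -/
noncomputable def Cexit (d : ℕ) (α : ℝ) : ℝ :=
  Real.Gamma (((d : ℝ) - 1) / 2) /
    (2 ^ α * Real.Gamma (((d : ℝ) - 1 + α) / 2) * Real.Gamma (1 + α / 2))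

/-- The constant `C̃_{d,α}`. -/
noncomputable def Ctilde (d : ℕ) (α : ℝ) : ℝ :=
  π ^ (((d : ℝ) - 1) / 2) / Real.Gamma (((d : ℝ) - 1) / 2) * Cexit d α *
    eulerBeta (1 + α / 2) (((d : ℝ) - 1) / 2)

/-- The norm `|ỹ|` of the first `d-1` coordinates of `y`. -/
noncomputable def tnorm (d : ℕ) (y : Ed d) : ℝ :=
  Real.sqrt (∑ i : Fin d, if (i : ℕ) < d - 1 then (y i) ^ 2 else 0)

/-- The function `s_ε`. -/
noncomputable def sExit (d : ℕ) (α ε : ℝ) (y : Ed d) : ℝ :=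
  Cexit d α * (max (ε ^ 2 - tnorm d y ^ 2) 0) ^ (α / 2)

/-- The cylinder `Π_ε`. -/
def cylPi (d : ℕ) (ε : ℝ) : Set (Ed d) := {y | tnorm d y < ε}

/-- The hyperplane `F = {y : y_d = 1}`. -/
def hyperF (d : ℕ) : Set (Ed d) := {y | lastCoord d y = 1}

/-- The Riesz kernel `h(y) = |y|^{α-d}`. -/
noncomputable def rieszH (d : ℕ) (α : ℝ) (y : Ed d) : ℝ := ‖y‖ ^ (α - (d : ℝ))

/-- The inversion `T x = x/|x|²`. -/
noncomputable def inversion (d : ℕ) (x : Ed d) : Ed d := (‖x‖ ^ 2)⁻¹ • x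

/-- The shifted cone `V_Θ = Γ_Θ + e_d/2`. -/
def Vcone (d : ℕ) (Θ : ℝ) : Set (Ed d) := {y | y - (1 / 2 : ℝ) • eLast d ∈ cone d Θ}

/-- The spindle `L_ε = T(V_Θ)` with `ε = tan(Θ/2)`, i.e. `Θ = 2 arctan ε`. -/
def Lspindle (d : ℕ) (ε : ℝ) : Set (Ed d) := inversion d '' Vcone d (2 * Real.arctan ε)

/-- The curvilinear projection `y* = T(e_d/2 + (Ty - e_d/2)/(2|Ty - e_d/2|))`. -/
noncomputable def ystar (d : ℕ) (y : Ed d) : Ed d :=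
  inversion d ((1 / 2 : ℝ) • eLast d +
    (2 * ‖inversion d y - (1 / 2 : ℝ) • eLast d‖)⁻¹ • (inversion d y - (1 / 2 : ℝ) • eLast d))

open scoped Classical in
/-- The function `s*_ε`. -/
noncomputable def sStar (d : ℕ) (α ε : ℝ) (y : Ed d) : ℝ :=
  if y ∈ Lspindle d ε then Cexit d α * (max (ε ^ 2 - tnorm d (ystar d y) ^ 2) 0) ^ (α / 2)
  else 0

open scoped Classical in
/-- The function `u = K(h s*_ε)`, i.e. `u(y) = s*_ε(Ty)`, `u(0) = 0`. -/
noncomputable def uFn (d : ℕ) (α ε : ℝ) (y : Ed d) : ℝ :=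
  if y = 0 then 0 else sStar d α ε (inversion d y)

/-- The spherical profile `φ_Θ`. -/
noncomputable def profileFn (d : ℕ) (α Θ : ℝ) (θ : Ed d) : ℝ :=
  2 ^ α * Cexit d α *
    (max (Real.tan (Θ / 2) ^ 2 - ‖eLast d - θ‖ ^ 2 / ‖eLast d + θ‖ ^ 2) 0) ^ (α / 2)

/-- Laplacian on ℝ^d as the sum of pure second partial derivatives. -/
noncomputable def lapE (d : ℕ) (u : Ed d → ℝ) (x : Ed d) : ℝ :=
  ∑ i : Fin d,
    iteratedFDeriv ℝ 2 u x ![EuclideanSpace.single i (1 : ℝ), EuclideanSpace.single i (1 : ℝ)]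

/-- Laplacian on ℝ^d × ℝ as the sum of the d+1 pure second partial derivatives. -/
noncomputable def lapProd (d : ℕ) (U : Ed d × ℝ → ℝ) (p : Ed d × ℝ) : ℝ :=
  (∑ i : Fin d, iteratedFDeriv ℝ 2 U p
      ![(EuclideanSpace.single i (1 : ℝ), (0 : ℝ)), (EuclideanSpace.single i (1 : ℝ), (0 : ℝ))]) +
    iteratedFDeriv ℝ 2 U p ![((0 : Ed d), (1 : ℝ)), ((0 : Ed d), (1 : ℝ))]

/-- The Poisson kernel `P_t(x)` for the upper half-space. -/
noncomputable def poissonK (d : ℕ) (t : ℝ) (x : Ed d) : ℝ :=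
  Real.Gamma (((d : ℝ) + 1) / 2) / π ^ (((d : ℝ) + 1) / 2) * t *
    (‖x‖ ^ 2 + t ^ 2) ^ (-((d : ℝ) + 1) / 2)

end

/-- The complement of a plane slit by a cone, in ℝ³. -/
def slitV (Θ : ℝ) : Set (Ed 3) :=
  {x | x 2 ≠ 0 ∨ Real.sqrt ((x 0) ^ 2 + (x 1) ^ 2) * Real.cos Θ < x 1}

/-!
In conal (elliptic) coordinates `(φ, ψ)` on the sphere, with `s = sin² Θ` and `c = cos² Θ`, the
domain becomes the rectangle `0 < φ < π`, `-π < ψ < π`, and a homogeneous harmonic function of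
degree `β` becomes a positive eigenfunction, vanishing on the boundary of the rectangle, of an
operator that splits into a `φ`-part and a `ψ`-part, with eigenvalue `β * (β + 1)`. Sliding products
`A φ * B ψ` against such an eigenfunction bounds the eigenvalue from below when the product is a
positive supersolution and from above when it is a subsolution, so it is enough to solve the
separated equations approximately. For `φ` the sine is exact up to a small perturbation. For `ψ` the
square root of `profileRadicand`, which has the correct behaviour at the slit, solves the equation
with `lam = 2 - 3 / 4 * s` to first order in `s`; an explicit integral removes the residual of
order `s`, and two terms of higher order give what is left either sign at the cost of changing `lam`
by `40 * s ^ (3 / 2)`. Hence `β * (β + 1) = 2 - 3 / 4 * s + O(s ^ (3 / 2))`, and solving the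
quadratic equation gives `β = 1 - s / 4 + O(s ^ (3 / 2))`.
-/

open scoped Topology Laplacian ContDiff

noncomputable section

/-- `g₁` and `g₂` are the first and second derivatives at `t` of the curve `g`, which is required
to be differentiable near `t`. -/
def HasSecondDerivAt {F : Type*} [NormedAddCommGroup F] [NormedSpace ℝ F] (g : ℝ → F) (g₁ g₂ : F)
    (t : ℝ) : Prop :=
  ∃ g' : ℝ → F, (∀ᶠ τ in 𝓝 t, HasDerivAt g (g' τ) τ) ∧ g' t = g₁ ∧ HasDerivAt g' g₂ t

namespace HasSecondDerivAt

section Vector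

variable {F : Type*} [NormedAddCommGroup F] [NormedSpace ℝ F] {f g : ℝ → F} {f₁ f₂ g₁ g₂ : F}
  {t : ℝ}

theorem hasDerivAt (hg : HasSecondDerivAt g g₁ g₂ t) : HasDerivAt g g₁ t := by
  obtain ⟨g', h, rfl, -⟩ := hg
  exact h.self_of_nhds

theorem of_forall {f' : ℝ → F} (h : ∀ τ, HasDerivAt f (f' τ) τ) (h' : HasDerivAt f' f₂ t) :
    HasSecondDerivAt f (f' t) f₂ t :=
  ⟨f', Eventually.of_forall h, rfl, h'⟩

theorem congr_values (hf : HasSecondDerivAt f f₁ f₂ t) (h₁ : f₁ = g₁) (h₂ : f₂ = g₂) :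
    HasSecondDerivAt f g₁ g₂ t :=
  h₁ ▸ h₂ ▸ hf

theorem congr (hf : HasSecondDerivAt f f₁ f₂ t) (h : f =ᶠ[𝓝 t] g) :
    HasSecondDerivAt g f₁ f₂ t := by
  obtain ⟨f', hf, rfl, hf'⟩ := hf
  refine ⟨f', ?_, rfl, hf'⟩
  filter_upwards [hf, h.eventuallyEq_nhds] with τ h h' using h.congr_of_eventuallyEq h'.symm

theorem unique (hf : HasSecondDerivAt f f₁ f₂ t) (hg : HasSecondDerivAt f g₁ g₂ t) :
    f₁ = g₁ ∧ f₂ = g₂ := by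
  obtain ⟨f', hf, rfl, hf'⟩ := hf
  obtain ⟨g', hg, rfl, hg'⟩ := hg
  have h : f' =ᶠ[𝓝 t] g' := by filter_upwards [hf, hg] with τ h h' using h.unique h'
  exact ⟨h.self_of_nhds, hf'.unique (hg'.congr_of_eventuallyEq h)⟩

theorem add (hf : HasSecondDerivAt f f₁ f₂ t) (hg : HasSecondDerivAt g g₁ g₂ t) :
    HasSecondDerivAt (fun τ => f τ + g τ) (f₁ + g₁) (f₂ + g₂) t := by
  obtain ⟨f', hf, rfl, hf'⟩ := hf
  obtain ⟨g', hg, rfl, hg'⟩ := hg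
  exact ⟨fun τ => f' τ + g' τ, by filter_upwards [hf, hg] with τ h h' using h.add h', rfl,
    hf'.add hg'⟩

theorem const_smul (hg : HasSecondDerivAt g g₁ g₂ t) (k : ℝ) :
    HasSecondDerivAt (fun τ => k • g τ) (k • g₁) (k • g₂) t := by
  obtain ⟨g', hg, rfl, hg'⟩ := hg
  exact ⟨fun τ => k • g' τ, by filter_upwards [hg] with τ h using h.const_smul k, rfl,
    hg'.const_smul k⟩

theorem sub (hf : HasSecondDerivAt f f₁ f₂ t) (hg : HasSecondDerivAt g g₁ g₂ t) :
    HasSecondDerivAt (fun τ => f τ - g τ) (f₁ - g₁) (f₂ - g₂) t := by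
  simpa [sub_eq_add_neg] using hf.add (hg.const_smul (-1))

end Vector

section Real

variable {f g : ℝ → ℝ} {f₁ f₂ g₁ g₂ t : ℝ}

theorem const_mul (hg : HasSecondDerivAt g g₁ g₂ t) (k : ℝ) :
    HasSecondDerivAt (fun τ => k * g τ) (k * g₁) (k * g₂) t :=
  hg.const_smul k

theorem mul (hf : HasSecondDerivAt f f₁ f₂ t) (hg : HasSecondDerivAt g g₁ g₂ t) :
    HasSecondDerivAt (fun τ => f τ * g τ) (f₁ * g t + f t * g₁)
      (f₂ * g t + 2 * f₁ * g₁ + f t * g₂) t := by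
  have hft := hf.hasDerivAt
  have hgt := hg.hasDerivAt
  obtain ⟨f', hf, rfl, hf'⟩ := hf
  obtain ⟨g', hg, rfl, hg'⟩ := hg
  refine ⟨fun τ => f' τ * g τ + f τ * g' τ,
    by filter_upwards [hf, hg] with τ h h' using h.mul h', rfl, ?_⟩
  exact ((hf'.mul hgt).add (hft.mul hg')).congr_deriv (by ring)

theorem comp (hf : HasSecondDerivAt f f₁ f₂ (g t)) (hg : HasSecondDerivAt g g₁ g₂ t) :
    HasSecondDerivAt (fun τ => f (g τ)) (f₁ * g₁) (f₂ * g₁ ^ 2 + f₁ * g₂) t := by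
  have hgt := hg.hasDerivAt
  obtain ⟨f', hf, rfl, hf'⟩ := hf
  obtain ⟨g', hg, rfl, hg'⟩ := hg
  refine ⟨fun τ => f' (g τ) * g' τ, ?_, rfl, ?_⟩
  · filter_upwards [hg, hgt.continuousAt.eventually hf] with τ h h' using h'.comp τ h
  · exact ((hf'.comp t hgt).mul hg').congr_deriv (by simp only [Function.comp_apply]; ring)

theorem isLocalMin (hg : HasSecondDerivAt g g₁ g₂ t) (h : IsLocalMin g t) : g₁ = 0 ∧ 0 ≤ g₂ := by
  have hg₁ : g₁ = 0 := h.hasDerivAt_eq_zero hg.hasDerivAt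
  refine ⟨hg₁, ?_⟩
  by_contra! hneg
  have hcont := hg.hasDerivAt.continuousAt
  obtain ⟨g', hd, h₁, hd'⟩ := hg
  have hderiv : deriv g =ᶠ[𝓝 t] g' := hd.mono fun τ hτ => hτ.deriv
  have hdd : deriv (deriv g) t = g₂ := by rw [hderiv.deriv_eq, hd'.deriv]
  have hmax : IsLocalMax g t := isLocalMax_of_deriv_deriv_neg (hdd ▸ hneg)
    (by rw [hderiv.self_of_nhds, h₁, hg₁]) hcont
  have hconst : g =ᶠ[𝓝 t] fun _ => g t := by
    filter_upwards [h, hmax] with τ h h' using le_antisymm h' h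
  have : deriv g =ᶠ[𝓝 t] fun _ => 0 := by
    filter_upwards [hconst.eventuallyEq_nhds] with τ hτ
    rw [hτ.deriv_eq, deriv_const]
  rw [this.deriv_eq, deriv_const] at hdd
  exact hneg.ne hdd.symm

end Real

end HasSecondDerivAt

section SecondDerivatives

variable {F : Type*} [NormedAddCommGroup F] [NormedSpace ℝ F]

theorem hasSecondDerivAt_add_smul (x v : F) (t : ℝ) :
    HasSecondDerivAt (fun τ : ℝ => x + τ • v) v 0 t :=
  .of_forall (f' := fun _ => v)
    (fun τ => by simpa using ((hasDerivAt_id τ).smul_const v).const_add x) (hasDerivAt_const t v)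

theorem hasSecondDerivAt_cos (t : ℝ) : HasSecondDerivAt cos (-sin t) (-cos t) t :=
  .of_forall hasDerivAt_cos (hasDerivAt_sin t).neg

theorem hasSecondDerivAt_sin (t : ℝ) : HasSecondDerivAt sin (cos t) (-sin t) t :=
  .of_forall hasDerivAt_sin (hasDerivAt_cos t)

theorem hasSecondDerivAt_exp (t : ℝ) : HasSecondDerivAt exp (exp t) (exp t) t :=
  .of_forall Real.hasDerivAt_exp (Real.hasDerivAt_exp t)

theorem hasSecondDerivAt_rpow {t : ℝ} (ht : 0 < t) (p : ℝ) :
    HasSecondDerivAt (fun τ => τ ^ p) (p * t ^ (p - 1)) (p * ((p - 1) * t ^ (p - 1 - 1))) t :=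
  ⟨fun τ => p * τ ^ (p - 1),
    (lt_mem_nhds ht).mono fun _ hτ => Real.hasDerivAt_rpow_const (.inl (ne_of_gt hτ)), rfl,
    (Real.hasDerivAt_rpow_const (.inl ht.ne')).const_mul p⟩

theorem hasSecondDerivAt_sqrt {t : ℝ} (ht : 0 < t) :
    HasSecondDerivAt Real.sqrt (1 / (2 * √t)) (-1 / (4 * t * √t)) t := by
  refine ⟨fun τ => 1 / (2 * √τ),
    (lt_mem_nhds ht).mono fun _ hτ => Real.hasDerivAt_sqrt (ne_of_gt hτ), rfl, ?_⟩
  have := Real.sqrt_pos.2 ht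
  refine ((((Real.hasDerivAt_sqrt ht.ne').const_mul 2).inv (by positivity)).congr_deriv
    ?_).congr_of_eventuallyEq (.of_forall fun τ => one_div _)
  field_simp
  rw [Real.sq_sqrt ht.le]
  ring

theorem HasSecondDerivAt.exists_sqrt {g : ℝ → ℝ} {g₁ g₂ t : ℝ} (hg : HasSecondDerivAt g g₁ g₂ t)
    (hpos : 0 < g t) :
    ∃ r₂, HasSecondDerivAt (fun τ => √(g τ)) (g₁ / (2 * √(g t))) r₂ t ∧
      2 * ((g₁ / (2 * √(g t))) ^ 2 + √(g t) * r₂) = g₂ := by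
  refine ⟨_, ((hasSecondDerivAt_sqrt hpos).comp hg).congr_values (by ring) rfl, ?_⟩
  have := Real.sqrt_pos.2 hpos
  have hsq := Real.sq_sqrt hpos.le
  field_simp
  rw [hsq]
  field_simp
  ring

theorem hasSecondDerivAt_quadratic (a b c t : ℝ) :
    HasSecondDerivAt (fun τ => a + b * τ + c * τ ^ 2) (b + 2 * c * t) (2 * c) t :=
  .of_forall (f' := fun τ => b + 2 * c * τ)
    (fun τ => ((((hasDerivAt_id τ).const_mul b).const_add a).fun_add
      ((hasDerivAt_pow 2 τ).const_mul c)).congr_deriv (by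
        simp only [Nat.cast_ofNat, Nat.add_one_sub_one, pow_one, mul_one]
        ring))
    (by simpa using ((hasDerivAt_id t).const_mul (2 * c)).const_add b)

theorem HasSecondDerivAt.comp_contDiffAt {u : F → ℝ} {γ : ℝ → F} {γ₁ γ₂ : F} {t : ℝ}
    (hu : ContDiffAt ℝ 2 u (γ t)) (hγ : HasSecondDerivAt γ γ₁ γ₂ t) :
    HasSecondDerivAt (fun τ => u (γ τ)) (fderiv ℝ u (γ t) γ₁)
      (fderiv ℝ (fderiv ℝ u) (γ t) γ₁ γ₁ + fderiv ℝ u (γ t) γ₂) t := by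
  have hγt := hγ.hasDerivAt
  obtain ⟨γ', hγ, rfl, hγ'⟩ := hγ
  have hdiff : ∀ᶠ y in 𝓝 (γ t), DifferentiableAt ℝ u y :=
    (hu.eventually (by simp)).mono fun y hy => hy.differentiableAt (by simp)
  have hfderiv : DifferentiableAt ℝ (fderiv ℝ u) (γ t) :=
    (hu.fderiv_right (m := 1) (by norm_num)).differentiableAt (by simp)
  refine ⟨fun τ => fderiv ℝ u (γ τ) (γ' τ), ?_, rfl, ?_⟩
  · filter_upwards [hγ, hγt.continuousAt.eventually hdiff] with τ h h'
    exact h'.hasFDerivAt.comp_hasDerivAt τ h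
  · exact (hfderiv.hasFDerivAt.comp_hasDerivAt t hγt).clm_apply hγ'

theorem hasSecondDerivAt_line {u : F → ℝ} {x : F} (hu : ContDiffAt ℝ 2 u x) (v : F) :
    HasSecondDerivAt (fun τ : ℝ => u (x + τ • v)) (fderiv ℝ u x v)
      (fderiv ℝ (fderiv ℝ u) x v v) 0 := by
  simpa using (hasSecondDerivAt_add_smul x v 0).comp_contDiffAt (u := u) (by simpa using hu)

theorem euler_relations {u : F → ℝ} {β : ℝ} {x : F} (hu : ContDiffAt ℝ 2 u x)
    (hhom : ∀ r : ℝ, 0 < r → u (r • x) = r ^ β * u x) :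
    fderiv ℝ u x x = β * u x ∧ fderiv ℝ (fderiv ℝ u) x x x = β * (β - 1) * u x := by
  have hray : HasSecondDerivAt (fun r : ℝ => r • x) x 0 1 := by
    simpa using hasSecondDerivAt_add_smul 0 x 1
  have hpow : HasSecondDerivAt (fun r : ℝ => u (r • x)) (u x * β) (u x * (β * (β - 1))) 1 := by
    refine (((hasSecondDerivAt_rpow one_pos β).const_mul (u x)).congr ?_).congr_values
      (by simp) (by simp)
    filter_upwards [lt_mem_nhds one_pos] with r hr using by rw [mul_comm, ← hhom r hr]
  have h := (hray.comp_contDiffAt (u := u) (by simpa using hu)).unique hpow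
  simp only [one_smul, map_zero, add_zero] at h
  exact ⟨by rw [h.1, mul_comm], by rw [h.2, mul_comm]⟩

theorem homogeneity_exponent_pos {u : F → ℝ} {β : ℝ} (hcont : ContinuousAt u 0) (h0 : u 0 = 0)
    {x : F} (hx : u x ≠ 0) (hhom : ∀ r : ℝ, 0 < r → u (r • x) = r ^ β * u x) : 0 < β := by
  by_contra! hβ
  have hlim : Tendsto (fun r : ℝ => |u (r • x)|) (𝓝[>] 0) (𝓝 0) := by
    have : ContinuousAt (fun r : ℝ => |u (r • x)|) 0 :=
      (ContinuousAt.comp' (by simpa using hcont) (by fun_prop)).abs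
    simpa [h0] using this.tendsto.mono_left nhdsWithin_le_nhds
  have hlarge : ∀ᶠ r : ℝ in 𝓝[>] 0, |u x| ≤ |u (r • x)| := by
    filter_upwards [Ioo_mem_nhdsGT one_pos] with r hr
    rw [hhom r hr.1, abs_mul, abs_of_pos (Real.rpow_pos_of_pos hr.1 β)]
    exact le_mul_of_one_le_left (abs_nonneg _)
      (Real.one_le_rpow_of_pos_of_le_one_of_nonpos hr.1 hr.2.le hβ)
  exact (abs_pos.2 hx).not_ge (ge_of_tendsto hlim hlarge)

end SecondDerivatives

section Laplacian

variable {E : Type*} [NormedAddCommGroup E] [InnerProductSpace ℝ E]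

theorem hasSecondDerivAt_gaussian_line (a : ℝ) (y z : E) {v : E} (hv : ‖v‖ = 1) :
    HasSecondDerivAt (fun τ : ℝ => exp (-a * ‖z + τ • v - y‖ ^ 2))
      (exp (-a * ‖z - y‖ ^ 2) * (-2 * a * ⟪z - y, v⟫))
      ((4 * a ^ 2 * ⟪z - y, v⟫ ^ 2 - 2 * a) * exp (-a * ‖z - y‖ ^ 2)) 0 := by
  have hline : ∀ τ : ℝ, -a * ‖z + τ • v - y‖ ^ 2 =
      -a * ‖z - y‖ ^ 2 + (-2 * a * ⟪z - y, v⟫) * τ + -a * τ ^ 2 := fun τ => by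
    rw [add_sub_right_comm, norm_add_sq_real, inner_smul_right, norm_smul, hv, norm_eq_abs, mul_one,
      sq_abs]
    ring
  simp only [hline]
  refine ((hasSecondDerivAt_exp _).comp (hasSecondDerivAt_quadratic _ _ _ 0)).congr_values ?_ ?_
  · simp
  · simp only [mul_zero, add_zero, ne_eq, OfNat.ofNat_ne_zero, not_false_eq_true, zero_pow]
    ring

theorem contDiff_gaussian (a : ℝ) (y : E) : ContDiff ℝ 2 fun z => exp (-a * ‖z - y‖ ^ 2) :=
  (contDiff_const.mul ((contDiff_id.sub contDiff_const).norm_sq ℝ)).exp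

variable [FiniteDimensional ℝ E]

theorem laplacian_eq_sum_fderiv_fderiv {ι : Type*} [Fintype ι] (b : OrthonormalBasis ι ℝ E)
    (u : E → ℝ) (x : E) : Δ u x = ∑ i, fderiv ℝ (fderiv ℝ u) x (b i) (b i) := by
  simp [InnerProductSpace.laplacian_eq_iteratedFDeriv_orthonormalBasis u b,
    iteratedFDeriv_two_apply]

theorem lapE_eq_laplacian (d : ℕ) (u : Ed d → ℝ) (x : Ed d) : lapE d u x = Δ u x := by
  simp [InnerProductSpace.laplacian_eq_iteratedFDeriv_orthonormalBasis u
    (EuclideanSpace.basisFun (Fin d) ℝ), lapE]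

theorem laplacian_nonneg_of_isLocalMin {v : E → ℝ} {z : E} (hv : ContDiffAt ℝ 2 v z)
    (hz : IsLocalMin v z) : 0 ≤ Δ v z := by
  rw [laplacian_eq_sum_fderiv_fderiv (stdOrthonormalBasis ℝ E)]
  refine Finset.sum_nonneg fun i _ => ((hasSecondDerivAt_line hv _).isLocalMin ?_).2
  exact IsLocalMin.comp_continuous (b := 0) (by simpa using hz) (by fun_prop)

theorem le_of_laplacian_neg {K : Set E} (hK : IsCompact K) {v : E → ℝ} (hv : ContinuousOn v K)
    {m : ℝ} (h : ∀ z ∈ K, v z < m → K ∈ 𝓝 z ∧ ContDiffAt ℝ 2 v z ∧ Δ v z < 0) {x : E}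
    (hx : x ∈ K) : m ≤ v x := by
  obtain ⟨z, hz, hmin⟩ := hK.exists_isMinOn ⟨x, hx⟩ hv
  refine le_trans ?_ (hmin hx)
  by_contra! hzm
  obtain ⟨hKz, hvz, hneg⟩ := h z hz hzm
  exact hneg.not_ge (laplacian_nonneg_of_isLocalMin hvz (hmin.isLocalMin hKz))

theorem laplacian_gaussian (a : ℝ) (y z : E) :
    Δ (fun z => exp (-a * ‖z - y‖ ^ 2)) z =
      (4 * a ^ 2 * ‖z - y‖ ^ 2 - 2 * a * Module.finrank ℝ E) * exp (-a * ‖z - y‖ ^ 2) := by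
  set b := stdOrthonormalBasis ℝ E
  have hdir : ∀ i, fderiv ℝ (fderiv ℝ fun z => exp (-a * ‖z - y‖ ^ 2)) z (b i) (b i) =
      (4 * a ^ 2 * ⟪z - y, b i⟫ ^ 2 - 2 * a) * exp (-a * ‖z - y‖ ^ 2) := fun i =>
    ((hasSecondDerivAt_line (contDiff_gaussian a y).contDiffAt (b i)).unique
      (hasSecondDerivAt_gaussian_line a y z (b.norm_eq_one i))).2
  rw [laplacian_eq_sum_fderiv_fderiv b, Finset.sum_congr rfl fun i _ => hdir i, ← Finset.sum_mul,
    Finset.sum_sub_distrib, ← Finset.mul_sum]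
  have hsq : ∑ i, ⟪z - y, b i⟫ ^ 2 = ‖z - y‖ ^ 2 := by
    simpa using b.sum_sq_norm_inner_left (z - y)
  rw [hsq, Finset.sum_const, Finset.card_univ, Fintype.card_fin, nsmul_eq_mul]
  ring

theorem laplacian_gaussian_pos {a : ℝ} {y z : E} (ha : 0 < a)
    (hz : Module.finrank ℝ E < 2 * a * ‖z - y‖ ^ 2) :
    0 < Δ (fun z => exp (-a * ‖z - y‖ ^ 2)) z := by
  rw [laplacian_gaussian]
  exact mul_pos (by nlinarith) (exp_pos _)

/- The barrier is a Gaussian centred at `y`, narrow enough to be strictly subharmonic off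
`ball y ρ`. -/
theorem pos_on_ball_of_le_near {u : E → ℝ} {y : E} {R ρ : ℝ} (hcont : Continuous u)
    (hnonneg : ∀ x, 0 ≤ u x) (hdiff : ∀ x ∈ ball y R, ContDiffAt ℝ 2 u x)
    (hlap : ∀ x ∈ ball y R, Δ u x ≤ 0) (hρ : 0 < ρ) {ε : ℝ} (hε : 0 < ε)
    (hnear : ∀ z ∈ ball y ρ, ε ≤ u z) {x : E} (hx : x ∈ ball y R) : 0 < u x := by
  set n := (Module.finrank ℝ E : ℝ)
  set a := (n + 1) / (2 * ρ ^ 2) with ha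
  have ha0 : 0 < a := by positivity
  have haρ : 2 * a * ρ ^ 2 = n + 1 := by rw [ha]; field_simp
  have hw := contDiff_gaussian a y
  have hmin : -(ε * exp (-a * R ^ 2)) ≤ u x - ε * exp (-a * ‖x - y‖ ^ 2) := by
    refine le_of_laplacian_neg (v := u - ε • fun z => exp (-a * ‖z - y‖ ^ 2))
      (isCompact_closedBall y R) (hcont.sub (hw.continuous.const_smul ε)).continuousOn
      (fun z hz hzm => ?_) (ball_subset_closedBall hx)
    simp only [Pi.sub_apply, Pi.smul_apply, smul_eq_mul] at hzm
    have hzR : z ∈ ball y R := by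
      refine lt_of_le_of_ne (mem_closedBall.1 hz) fun h => ?_
      rw [← dist_eq_norm, h] at hzm
      linarith [hnonneg z]
    have hzρ : ρ ≤ ‖z - y‖ := by
      by_contra! h
      have hle : exp (-a * ‖z - y‖ ^ 2) ≤ 1 := exp_le_one_iff.2 (by nlinarith [sq_nonneg ‖z - y‖])
      have : 0 < ε * exp (-a * R ^ 2) := by positivity
      nlinarith [hnear z (by rwa [mem_ball, dist_eq_norm])]
    have hzn : n < 2 * a * ‖z - y‖ ^ 2 := by
      have : 2 * a * ρ ^ 2 ≤ 2 * a * ‖z - y‖ ^ 2 := by gcongr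
      linarith
    have hεw : ContDiffAt ℝ 2 (ε • fun z => exp (-a * ‖z - y‖ ^ 2)) z :=
      (hw.const_smul ε).contDiffAt
    refine ⟨closedBall_mem_nhds_of_mem hzR, (hdiff z hzR).sub hεw, ?_⟩
    rw [(hdiff z hzR).laplacian_sub hεw, InnerProductSpace.laplacian_smul _ hw.contDiffAt,
      smul_eq_mul]
    linarith [hlap z hzR, mul_pos hε (laplacian_gaussian_pos ha0 hzn)]
  have hstrict : ε * exp (-a * R ^ 2) < ε * exp (-a * ‖x - y‖ ^ 2) := by
    have hxR : ‖x - y‖ < R := by rwa [← dist_eq_norm]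
    have : ‖x - y‖ ^ 2 < R ^ 2 := by gcongr
    gcongr ε * exp ?_
    nlinarith
  linarith

theorem pos_on_ball_of_superharmonic {u : E → ℝ} {y : E} {R : ℝ} (hcont : Continuous u)
    (hnonneg : ∀ x, 0 ≤ u x) (hdiff : ∀ x ∈ ball y R, ContDiffAt ℝ 2 u x)
    (hlap : ∀ x ∈ ball y R, Δ u x ≤ 0) (hy : 0 < u y) {x : E} (hx : x ∈ ball y R) :
    0 < u x := by
  obtain ⟨ρ, hρ, hnear⟩ := Metric.eventually_nhds_iff_ball.1
    (hcont.continuousAt.eventually (lt_mem_nhds (half_lt_self hy)))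
  exact pos_on_ball_of_le_near hcont hnonneg hdiff hlap hρ (half_pos hy)
    (fun z hz => (hnear z hz).le) hx

theorem pos_of_superharmonic {u : E → ℝ} {V : Set E} (hV : IsOpen V) (hVc : IsPreconnected V)
    (hcont : Continuous u) (hnonneg : ∀ x, 0 ≤ u x) (hdiff : ContDiffOn ℝ 2 u V)
    (hlap : ∀ x ∈ V, Δ u x ≤ 0) {y : E} (hyV : y ∈ V) (hy : 0 < u y) {x : E} (hx : x ∈ V) :
    0 < u x := by
  refine hVc.subset_of_closure_inter_subset (u := {x | 0 < u x})
    (isOpen_lt continuous_const hcont) ⟨y, hyV, hy⟩ ?_ hx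
  rintro x ⟨hx, hxV⟩
  obtain ⟨R, hR, hRV⟩ := Metric.isOpen_iff.1 hV x hxV
  obtain ⟨z, hz, hzx⟩ := Metric.mem_closure_iff.1 hx (R / 2) (half_pos hR)
  have hzV : ball z (R / 2) ⊆ V :=
    (ball_subset_ball' (by rw [dist_comm]; linarith)).trans hRV
  exact pos_on_ball_of_superharmonic hcont hnonneg
    (fun w hw => hdiff.contDiffAt (hV.mem_nhds (hzV hw))) (fun w hw => hlap w (hzV hw)) hz hzx

end Laplacian

theorem laplacian_eq_sum_of_pairwise_orthogonal {E : Type*} [NormedAddCommGroup E]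
    [InnerProductSpace ℝ E] [FiniteDimensional ℝ E] {ι : Type*} [Fintype ι] {w : ι → E}
    (hw : ∀ i, w i ≠ 0) (horth : Pairwise fun i j => ⟪w i, w j⟫ = 0)
    (hcard : Fintype.card ι = Module.finrank ℝ E) (u : E → ℝ) (x : E) :
    Δ u x = ∑ i, fderiv ℝ (fderiv ℝ u) x (w i) (w i) / ‖w i‖ ^ 2 := by
  have hon : Orthonormal ℝ fun i => ‖w i‖⁻¹ • w i := by
    refine ⟨fun i => ?_, fun i j hij => ?_⟩
    · have := norm_ne_zero_iff.2 (hw i)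
      simp [norm_smul, this]
    · simp [inner_smul_left, inner_smul_right, horth hij]
  have hspan := (hon.linearIndependent.span_eq_top_of_card_eq_finrank' hcard).ge
  rw [laplacian_eq_sum_fderiv_fderiv (OrthonormalBasis.mk hon hspan)]
  refine Finset.sum_congr rfl fun i _ => ?_
  simp only [OrthonormalBasis.coe_mk, map_smul, FunLike.coe_smul, Pi.smul_apply, smul_eq_mul]
  ring

theorem hasSecondDerivAt_toLp {ι : Type*} [Fintype ι] {γ : ℝ → ι → ℝ} {γ₁ γ₂ : ι → ℝ} {t : ℝ}
    (hγ : ∀ i, HasSecondDerivAt (fun τ => γ τ i) (γ₁ i) (γ₂ i) t) :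
    HasSecondDerivAt (fun τ => WithLp.toLp 2 (γ τ)) (WithLp.toLp 2 γ₁) (WithLp.toLp 2 γ₂) t := by
  have htoLp : ∀ {δ : ℝ → ι → ℝ} {δ' : ι → ℝ} {τ : ℝ}, (∀ i, HasDerivAt (fun τ => δ τ i) (δ' i) τ) →
      HasDerivAt (fun τ => WithLp.toLp 2 (δ τ)) (WithLp.toLp 2 δ') τ := fun hδ =>
    (EuclideanSpace.equiv ι ℝ).symm.toContinuousLinearMap.hasFDerivAt.comp_hasDerivAt _
      (hasDerivAt_pi.2 hδ)
  choose γ' h h₁ h₂ using hγ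
  refine ⟨fun τ => WithLp.toLp 2 fun i => γ' i τ, ?_, congrArg _ (funext h₁), htoLp h₂⟩
  filter_upwards [eventually_all.2 h] with τ hτ using htoLp hτ

/-- The point of the unit sphere with sphero-conal coordinates `(φ, ψ)`, where the parameters of
the coordinate system satisfy `s + c = 1`. For `s = sin² Θ` the slit is `φ ∈ {0, π}` together with
`ψ = ±π`. -/
def conalPoint (s c φ ψ : ℝ) : Ed 3 :=
  !₂[cos φ * √(1 - c * cos ψ ^ 2), cos ψ * √(1 - s * cos φ ^ 2), sin φ * sin ψ]

/-- The derivative of `conalPoint` with respect to `φ`. -/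
def conalTangentLeft (s c φ ψ : ℝ) : Ed 3 :=
  !₂[-sin φ * √(1 - c * cos ψ ^ 2), cos ψ * (s * sin φ * cos φ / √(1 - s * cos φ ^ 2)),
    cos φ * sin ψ]

/-- The derivative of `conalPoint` with respect to `ψ`. -/
def conalTangentRight (s c φ ψ : ℝ) : Ed 3 :=
  !₂[cos φ * (c * sin ψ * cos ψ / √(1 - c * cos ψ ^ 2)), -sin ψ * √(1 - s * cos φ ^ 2),
    sin φ * cos ψ]

/-- The orthogonal frame of `ℝ³` at `conalPoint s c φ ψ` formed by the two coordinate directions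
and the radial direction. -/
def conalFrame (s c φ ψ : ℝ) : Fin 3 → Ed 3 :=
  ![conalTangentLeft s c φ ψ, conalTangentRight s c φ ψ, conalPoint s c φ ψ]

/-- The weight multiplying the eigenvalue when the spherical Laplacian is written in sphero-conal
coordinates. -/
def conalWeight (s c φ ψ : ℝ) : ℝ := c * sin ψ ^ 2 + s * sin φ ^ 2

/-- The operator `√p (√p g')'` with `p = 1 - s cos²`, into which the spherical Laplacian separates
in sphero-conal coordinates, takes the value `ℓ` on `g` at `t`. -/
def HasConalOpAt (s : ℝ) (g : ℝ → ℝ) (ℓ t : ℝ) : Prop :=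
  ∃ g₁ g₂, HasSecondDerivAt g g₁ g₂ t ∧ (1 - s * cos t ^ 2) * g₂ + s * sin t * cos t * g₁ = ℓ

theorem one_sub_mul_cos_sq_nonneg {s : ℝ} (hs1 : s ≤ 1) (t : ℝ) : 0 ≤ 1 - s * cos t ^ 2 := by
  nlinarith [cos_sq_le_one t, sq_nonneg (cos t)]

theorem exists_hasSecondDerivAt_sqrt_conal {s t : ℝ} (h : 0 < 1 - s * cos t ^ 2) :
    ∃ r₂, HasSecondDerivAt (fun τ => √(1 - s * cos τ ^ 2))
        (s * sin t * cos t / √(1 - s * cos t ^ 2)) r₂ t ∧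
      (1 - s * cos t ^ 2) * r₂ +
        s * sin t * cos t * (s * sin t * cos t / √(1 - s * cos t ^ 2)) =
      s * cos (2 * t) * √(1 - s * cos t ^ 2) := by
  have hg : HasSecondDerivAt (fun τ => 1 - s * cos τ ^ 2) (2 * (s * sin t * cos t))
      (2 * (s * cos (2 * t))) t :=
    ((hasSecondDerivAt_quadratic 1 0 (-s) _).comp (hasSecondDerivAt_cos t)).congr
      (.of_forall fun τ => by ring) |>.congr_values (by ring) (by
        rw [cos_two_mul]; linear_combination -2 * s * sin_sq_add_cos_sq t)
  obtain ⟨r₂, hr, hr₂⟩ := hg.exists_sqrt h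
  have hsqrt := Real.sqrt_pos.2 h
  have hsq := Real.sq_sqrt h.le
  rw [mul_div_mul_left _ _ two_ne_zero] at hr hr₂
  refine ⟨r₂, hr, ?_⟩
  set r := √(1 - s * cos t ^ 2)
  set d := s * sin t * cos t
  rw [← hsq]
  field_simp at hr₂ ⊢
  linear_combination hr₂

section ConalCoordinates

variable {s c φ ψ : ℝ}

theorem hasSecondDerivAt_conalPoint_left (c ψ : ℝ) (hs : 0 < 1 - s * cos φ ^ 2) :
    ∃ v, HasSecondDerivAt (fun t => conalPoint s c t ψ) (conalTangentLeft s c φ ψ) v φ ∧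
      (1 - s * cos φ ^ 2) • v + (s * sin φ * cos φ) • conalTangentLeft s c φ ψ =
        (s * cos (2 * φ)) • conalPoint s c φ ψ -
          !₂[conalPoint s c φ ψ 0, 0, (1 - s) * conalPoint s c φ ψ 2] := by
  obtain ⟨r₂, hr, hr₂⟩ := exists_hasSecondDerivAt_sqrt_conal hs
  refine ⟨!₂[√(1 - c * cos ψ ^ 2) * -cos φ, cos ψ * r₂, sin ψ * -sin φ],
    hasSecondDerivAt_toLp fun i => ?_, ?_⟩
  · fin_cases i
    · exact (((hasSecondDerivAt_cos φ).const_mul _).congr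
        (.of_forall fun t => mul_comm _ _)).congr_values (mul_comm _ _) rfl
    · exact hr.const_mul _
    · exact (((hasSecondDerivAt_sin φ).const_mul _).congr
        (.of_forall fun t => mul_comm _ _)).congr_values (mul_comm _ _) rfl
  · ext i
    have hφ := sin_sq_add_cos_sq φ
    fin_cases i <;> simp only [conalPoint, conalTangentLeft, cos_two_mul, PiLp.add_apply,
      PiLp.sub_apply, PiLp.smul_apply, smul_eq_mul, Fin.zero_eta, Fin.mk_one, Fin.reduceFinMk,
      Matrix.cons_val_zero, Matrix.cons_val_one, Matrix.cons_val] at hr₂ ⊢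
    · linear_combination -s * cos φ * √(1 - c * cos ψ ^ 2) * hφ
    · linear_combination cos ψ * hr₂
    · ring

theorem hasSecondDerivAt_conalPoint_right (s φ : ℝ) (hc : 0 < 1 - c * cos ψ ^ 2) :
    ∃ v, HasSecondDerivAt (fun t => conalPoint s c φ t) (conalTangentRight s c φ ψ) v ψ ∧
      (1 - c * cos ψ ^ 2) • v + (c * sin ψ * cos ψ) • conalTangentRight s c φ ψ =
        (c * cos (2 * ψ)) • conalPoint s c φ ψ -
          !₂[0, conalPoint s c φ ψ 1, (1 - c) * conalPoint s c φ ψ 2] := by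
  obtain ⟨r₂, hr, hr₂⟩ := exists_hasSecondDerivAt_sqrt_conal hc
  refine ⟨!₂[cos φ * r₂, √(1 - s * cos φ ^ 2) * -cos ψ, sin φ * -sin ψ],
    hasSecondDerivAt_toLp fun i => ?_, ?_⟩
  · fin_cases i
    · exact hr.const_mul _
    · exact (((hasSecondDerivAt_cos ψ).const_mul _).congr
        (.of_forall fun t => mul_comm _ _)).congr_values (mul_comm _ _) rfl
    · exact (hasSecondDerivAt_sin ψ).const_mul _
  · ext i
    have hψ := sin_sq_add_cos_sq ψ
    fin_cases i <;> simp only [conalPoint, conalTangentRight, cos_two_mul, PiLp.add_apply,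
      PiLp.sub_apply, PiLp.smul_apply, smul_eq_mul, Fin.zero_eta, Fin.mk_one, Fin.reduceFinMk,
      Matrix.cons_val_zero, Matrix.cons_val_one, Matrix.cons_val] at hr₂ ⊢
    · linear_combination cos φ * hr₂
    · linear_combination -c * cos ψ * √(1 - s * cos φ ^ 2) * hψ
    · ring

theorem norm_conalPoint (hsc : s + c = 1) (hs : 0 ≤ 1 - s * cos φ ^ 2)
    (hc : 0 ≤ 1 - c * cos ψ ^ 2) :
    ‖conalPoint s c φ ψ‖ = 1 := by
  rw [← sq_eq_sq₀ (norm_nonneg _) zero_le_one, EuclideanSpace.real_norm_sq_eq]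
  simp only [conalPoint, Fin.sum_univ_three, Matrix.cons_val_zero, Matrix.cons_val_one,
    Matrix.cons_val, mul_pow, Real.sq_sqrt hs, Real.sq_sqrt hc]
  have hφ := sin_sq_add_cos_sq φ
  have hψ := sin_sq_add_cos_sq ψ
  linear_combination sin ψ ^ 2 * hφ + hψ - cos φ ^ 2 * hψ - cos φ ^ 2 * cos ψ ^ 2 * hsc

theorem norm_sq_conalTangentLeft (hsc : s + c = 1) (hs : 0 < 1 - s * cos φ ^ 2)
    (hc : 0 ≤ 1 - c * cos ψ ^ 2) :
    ‖conalTangentLeft s c φ ψ‖ ^ 2 = conalWeight s c φ ψ / (1 - s * cos φ ^ 2) := by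
  rw [eq_div_iff hs.ne', EuclideanSpace.real_norm_sq_eq]
  simp only [conalTangentLeft, conalWeight, Fin.sum_univ_three, Matrix.cons_val_zero,
    Matrix.cons_val_one, Matrix.cons_val, mul_pow, div_pow, Real.sq_sqrt hs.le, Real.sq_sqrt hc]
  obtain rfl : c = 1 - s := by linarith
  field_simp
  simp only [sin_sq]
  ring

theorem norm_sq_conalTangentRight (hsc : s + c = 1) (hs : 0 ≤ 1 - s * cos φ ^ 2)
    (hc : 0 < 1 - c * cos ψ ^ 2) :
    ‖conalTangentRight s c φ ψ‖ ^ 2 = conalWeight s c φ ψ / (1 - c * cos ψ ^ 2) := by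
  rw [eq_div_iff hc.ne', EuclideanSpace.real_norm_sq_eq]
  simp only [conalTangentRight, conalWeight, Fin.sum_univ_three, Matrix.cons_val_zero,
    Matrix.cons_val_one, Matrix.cons_val, mul_pow, div_pow, Real.sq_sqrt hc.le, Real.sq_sqrt hs]
  obtain rfl : c = 1 - s := by linarith
  field_simp
  simp only [sin_sq]
  ring

theorem pairwise_orthogonal_conalFrame (hsc : s + c = 1) (hs : 0 < 1 - s * cos φ ^ 2)
    (hc : 0 < 1 - c * cos ψ ^ 2) :
    Pairwise fun i j => ⟪conalFrame s c φ ψ i, conalFrame s c φ ψ j⟫ = 0 := by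
  have hh := (Real.sqrt_pos.2 hs).ne'
  have hp := (Real.sqrt_pos.2 hc).ne'
  have hh2 := Real.sq_sqrt hs.le
  have hp2 := Real.sq_sqrt hc.le
  have hlr : ⟪conalTangentLeft s c φ ψ, conalTangentRight s c φ ψ⟫ = 0 := by
    simp only [conalTangentLeft, conalTangentRight, PiLp.inner_apply, Fin.sum_univ_three,
      RCLike.inner_apply, conj_trivial, Matrix.cons_val_zero, Matrix.cons_val_one, Matrix.cons_val]
    generalize √(1 - s * cos φ ^ 2) = h at *
    generalize √(1 - c * cos ψ ^ 2) = p at *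
    field_simp
    linear_combination -(sin φ * cos φ * sin ψ * cos ψ) * hsc
  have hlp : ⟪conalTangentLeft s c φ ψ, conalPoint s c φ ψ⟫ = 0 := by
    simp only [conalTangentLeft, conalPoint, PiLp.inner_apply, Fin.sum_univ_three,
      RCLike.inner_apply, conj_trivial, Matrix.cons_val_zero, Matrix.cons_val_one, Matrix.cons_val]
    generalize √(1 - s * cos φ ^ 2) = h at *
    field_simp
    linear_combination sin φ * cos φ * (cos ψ ^ 2 * hsc - hp2 + sin_sq_add_cos_sq ψ)
  have hrp : ⟪conalTangentRight s c φ ψ, conalPoint s c φ ψ⟫ = 0 := by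
    simp only [conalTangentRight, conalPoint, PiLp.inner_apply, Fin.sum_univ_three,
      RCLike.inner_apply, conj_trivial, Matrix.cons_val_zero, Matrix.cons_val_one, Matrix.cons_val]
    generalize √(1 - s * cos φ ^ 2) = h at *
    generalize √(1 - c * cos ψ ^ 2) = p at *
    field_simp
    linear_combination sin ψ * cos ψ * (cos φ ^ 2 * hsc - hh2 + sin_sq_add_cos_sq φ)
  intro i j hij
  fin_cases i <;> fin_cases j <;> first
    | exact absurd rfl hij
    | assumption
    | (rw [real_inner_comm]; assumption)

theorem laplacian_eq_conal (hsc : s + c = 1) (hs : 0 < 1 - s * cos φ ^ 2)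
    (hc : 0 < 1 - c * cos ψ ^ 2) (hN : 0 < conalWeight s c φ ψ) (u : Ed 3 → ℝ) (x : Ed 3) :
    conalWeight s c φ ψ * Δ u x =
      (1 - s * cos φ ^ 2) *
          fderiv ℝ (fderiv ℝ u) x (conalTangentLeft s c φ ψ) (conalTangentLeft s c φ ψ) +
        (1 - c * cos ψ ^ 2) *
          fderiv ℝ (fderiv ℝ u) x (conalTangentRight s c φ ψ) (conalTangentRight s c φ ψ) +
        conalWeight s c φ ψ *
          fderiv ℝ (fderiv ℝ u) x (conalPoint s c φ ψ) (conalPoint s c φ ψ) := by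
  have hl := norm_sq_conalTangentLeft hsc hs hc.le
  have hr := norm_sq_conalTangentRight hsc hs.le hc
  have hne : ∀ {v : Ed 3} {a : ℝ}, ‖v‖ ^ 2 = a → 0 < a → v ≠ 0 := by
    rintro v a h ha rfl
    simp [ha.ne] at h
  have hp : ‖conalPoint s c φ ψ‖ ^ 2 = 1 := by rw [norm_conalPoint hsc hs.le hc.le, one_pow]
  rw [laplacian_eq_sum_of_pairwise_orthogonal (fun i => ?_)
    (pairwise_orthogonal_conalFrame hsc hs hc) (by simp)]
  · simp only [conalFrame, Fin.sum_univ_three, Matrix.cons_val_zero, Matrix.cons_val_one,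
      Matrix.cons_val, hl, hr, hp]
    field_simp
  · fin_cases i
    · exact hne hl (by positivity)
    · exact hne hr (by positivity)
    · exact hne hp one_pos

theorem conal_equation {u : Ed 3 → ℝ} {β : ℝ} (hsc : s + c = 1) (hs : 0 < 1 - s * cos φ ^ 2)
    (hc : 0 < 1 - c * cos ψ ^ 2) (hN : 0 < conalWeight s c φ ψ)
    (hu : ContDiffAt ℝ 2 u (conalPoint s c φ ψ)) (hlap : Δ u (conalPoint s c φ ψ) = 0)
    (hhom : ∀ r : ℝ, 0 < r → u (r • conalPoint s c φ ψ) = r ^ β * u (conalPoint s c φ ψ)) :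
    ∃ a b, HasConalOpAt s (fun t => u (conalPoint s c t ψ)) a φ ∧
      HasConalOpAt c (fun t => u (conalPoint s c φ t)) b ψ ∧
      a + b = -(β * (β + 1)) * conalWeight s c φ ψ * u (conalPoint s c φ ψ) := by
  obtain ⟨v, hv, hv'⟩ := hasSecondDerivAt_conalPoint_left c ψ hs
  obtain ⟨w, hw, hw'⟩ := hasSecondDerivAt_conalPoint_right s φ hc
  refine ⟨_, _, ⟨_, _, hv.comp_contDiffAt hu, rfl⟩, ⟨_, _, hw.comp_contDiffAt hu, rfl⟩, ?_⟩
  have hsum : (1 - s * cos φ ^ 2) • v + (s * sin φ * cos φ) • conalTangentLeft s c φ ψ +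
      ((1 - c * cos ψ ^ 2) • w + (c * sin ψ * cos ψ) • conalTangentRight s c φ ψ) =
      (-2 * conalWeight s c φ ψ) • conalPoint s c φ ψ := by
    rw [hv', hw']
    obtain rfl : c = 1 - s := by linarith
    ext i
    fin_cases i <;> simp only [conalWeight, cos_two_mul, sin_sq, PiLp.add_apply, PiLp.sub_apply,
      PiLp.smul_apply, smul_eq_mul, Fin.zero_eta, Fin.mk_one, Fin.reduceFinMk,
      Matrix.cons_val_zero, Matrix.cons_val_one, Matrix.cons_val] <;> ring
  have hgrad := congrArg (fderiv ℝ u (conalPoint s c φ ψ)) hsum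
  simp only [map_add, map_smul, smul_eq_mul] at hgrad
  have hhess := laplacian_eq_conal hsc hs hc hN u (conalPoint s c φ ψ)
  obtain ⟨hE, hE'⟩ := euler_relations hu hhom
  rw [hlap, hE'] at hhess
  rw [hE] at hgrad
  linear_combination hgrad - hhess

end ConalCoordinates

section SlitPlane

theorem continuous_conalPoint (s c : ℝ) :
    Continuous fun z : ℝ × ℝ => conalPoint s c z.1 z.2 := by
  refine (EuclideanSpace.equiv (Fin 3) ℝ).symm.continuous.comp (continuous_pi fun i => ?_)
  fin_cases i <;> simp only [Fin.zero_eta, Fin.mk_one, Fin.reduceFinMk, Matrix.cons_val_zero,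
    Matrix.cons_val_one, Matrix.cons_val] <;> fun_prop

theorem sqrt_conalPoint {s c φ ψ : ℝ} (hsc : s + c = 1) (hs : 0 ≤ 1 - s * cos φ ^ 2)
    (hc : 0 ≤ 1 - c * cos ψ ^ 2) (h : sin φ * sin ψ = 0) :
    √(conalPoint s c φ ψ 0 ^ 2 + conalPoint s c φ ψ 1 ^ 2) = 1 := by
  have hnorm := EuclideanSpace.real_norm_sq_eq (conalPoint s c φ ψ)
  have hthird : conalPoint s c φ ψ 2 = 0 := h
  rw [norm_conalPoint hsc hs hc, Fin.sum_univ_three, hthird] at hnorm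
  rw [Real.sqrt_eq_one]
  linarith

variable {Θ φ ψ : ℝ}

theorem one_sub_sin_sq_mul_cos_sq (Θ t : ℝ) :
    1 - sin Θ ^ 2 * cos t ^ 2 = cos Θ ^ 2 + sin Θ ^ 2 * sin t ^ 2 := by
  linear_combination -sin_sq_add_cos_sq Θ - sin Θ ^ 2 * sin_sq_add_cos_sq t

theorem conalPoint_mem_slitV (hs : sin Θ ≠ 0) (hφ : φ ∈ Ioo 0 π) (hψ : ψ ∈ Ioo (-π) π) :
    conalPoint (sin Θ ^ 2) (cos Θ ^ 2) φ ψ ∈ slitV Θ := by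
  have hsφ : 0 < sin φ := sin_pos_of_mem_Ioo hφ
  by_cases h : sin ψ = 0
  · right
    rw [sqrt_conalPoint (sin_sq_add_cos_sq Θ) (one_sub_mul_cos_sq_nonneg (sin_sq_le_one Θ) φ)
      (one_sub_mul_cos_sq_nonneg (cos_sq_le_one Θ) ψ) (by rw [h, mul_zero]), one_mul]
    have hψ0 : ψ = 0 := (sin_eq_zero_iff_of_lt_of_lt hψ.1 hψ.2).1 h
    have : 0 < sin Θ ^ 2 * sin φ ^ 2 := by positivity
    simp only [conalPoint, hψ0, cos_zero, one_mul, one_sub_sin_sq_mul_cos_sq, Matrix.cons_val_one,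
      Matrix.cons_val_zero]
    exact Real.lt_sqrt_of_sq_lt (by linarith)
  · exact .inl (mul_ne_zero hsφ.ne' h)

theorem conalPoint_notMem_slitV (hΘ : 0 ≤ cos Θ) (h : sin φ = 0 ∨ cos ψ = -1) :
    conalPoint (sin Θ ^ 2) (cos Θ ^ 2) φ ψ ∉ slitV Θ := by
  have hthird : sin φ * sin ψ = 0 := by
    rcases h with h | h
    · rw [h, zero_mul]
    · rw [sin_eq_zero_iff_cos_eq.2 (.inr h), mul_zero]
  rintro (h2 | h1)
  · exact h2 hthird
  rw [sqrt_conalPoint (sin_sq_add_cos_sq Θ) (one_sub_mul_cos_sq_nonneg (sin_sq_le_one Θ) φ)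
    (one_sub_mul_cos_sq_nonneg (cos_sq_le_one Θ) ψ) hthird, one_mul] at h1
  refine h1.not_ge ?_
  simp only [conalPoint, one_sub_sin_sq_mul_cos_sq, Matrix.cons_val_one, Matrix.cons_val_zero]
  rcases h with h | h
  · rw [h, zero_pow two_ne_zero, mul_zero, add_zero, Real.sqrt_sq hΘ]
    exact mul_le_of_le_one_left hΘ (cos_le_one ψ)
  · rw [h]
    linarith [Real.sqrt_nonneg (cos Θ ^ 2 + sin Θ ^ 2 * sin φ ^ 2)]

theorem isOpen_slitV (Θ : ℝ) : IsOpen (slitV Θ) :=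
  (isOpen_ne_fun (f := fun x : Ed 3 => x 2) (by fun_prop) continuous_const).union
    (isOpen_lt (f := fun x : Ed 3 => √(x 0 ^ 2 + x 1 ^ 2) * cos Θ) (g := fun x => x 1)
      (by fun_prop) (by fun_prop))

theorem starConvex_slitV (h0 : 0 ≤ cos Θ) (h1 : cos Θ < 1) :
    StarConvex ℝ (EuclideanSpace.single 1 1 : Ed 3) (slitV Θ) := by
  intro y hy a b ha hb hab
  rcases hb.eq_or_lt with rfl | hb
  · obtain rfl : a = 1 := by linarith
    exact .inr (by simpa using h1)
  rcases hy with hy | hy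
  · exact .inl (by simpa using ⟨hb.ne', hy⟩)
  right
  have htriangle : √((b * y 0) ^ 2 + (a + b * y 1) ^ 2) ≤ a + b * √(y 0 ^ 2 + y 1 ^ 2) := by
    simpa [Complex.norm_eq_sqrt_sq_add_sq, add_comm, abs_of_nonneg, ha, hb.le] using
      norm_add_le (a : ℂ) (b * ⟨y 1, y 0⟩)
  have hcoord : ∀ i, (a • (EuclideanSpace.single 1 1 : Ed 3) + b • y) i =
      (if i = 1 then a else 0) + b * y i := fun i => by simp [PiLp.single_apply]
  simp only [hcoord, Fin.isValue, zero_ne_one, if_false, if_true, zero_add]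
  calc _ ≤ (a + b * √(y 0 ^ 2 + y 1 ^ 2)) * cos Θ := by gcongr
    _ = a * cos Θ + b * (√(y 0 ^ 2 + y 1 ^ 2) * cos Θ) := by ring
    _ < a + b * y 1 := add_lt_add_of_le_of_lt (mul_le_of_le_one_right ha h1.le) (by gcongr)

theorem isPreconnected_slitV (h0 : 0 ≤ cos Θ) (h1 : cos Θ < 1) : IsPreconnected (slitV Θ) :=
  ((starConvex_slitV h0 h1).isPathConnected (.inr (by simpa using h1))).isConnected.isPreconnected

end SlitPlane

namespace HasConalOpAt

variable {s ℓ ℓ' t : ℝ} {g h : ℝ → ℝ}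

theorem const_mul (hg : HasConalOpAt s g ℓ t) (k : ℝ) :
    HasConalOpAt s (fun τ => k * g τ) (k * ℓ) t := by
  obtain ⟨g₁, g₂, hg, rfl⟩ := hg
  exact ⟨_, _, hg.const_mul k, by ring⟩

theorem add (hg : HasConalOpAt s g ℓ t) (hh : HasConalOpAt s h ℓ' t) :
    HasConalOpAt s (fun τ => g τ + h τ) (ℓ + ℓ') t := by
  obtain ⟨g₁, g₂, hg, rfl⟩ := hg
  obtain ⟨h₁, h₂, hh, rfl⟩ := hh
  exact ⟨_, _, hg.add hh, by ring⟩

theorem sub (hg : HasConalOpAt s g ℓ t) (hh : HasConalOpAt s h ℓ' t) :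
    HasConalOpAt s (fun τ => g τ - h τ) (ℓ - ℓ') t := by
  obtain ⟨g₁, g₂, hg, rfl⟩ := hg
  obtain ⟨h₁, h₂, hh, rfl⟩ := hh
  exact ⟨_, _, hg.sub hh, by ring⟩

theorem nonneg_of_isLocalMin (hg : HasConalOpAt s g ℓ t) (hs : s ≤ 1) (hmin : IsLocalMin g t) :
    0 ≤ ℓ := by
  obtain ⟨g₁, g₂, hg, rfl⟩ := hg
  obtain ⟨rfl, h₂⟩ := hg.isLocalMin hmin
  rw [mul_zero, add_zero]
  exact mul_nonneg (one_sub_mul_cos_sq_nonneg hs t) h₂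

end HasConalOpAt

/-- A positive Dirichlet eigenfunction, with eigenvalue `lam`, of the spherical Laplacian on the
sphero-conal coordinate rectangle `(0, π) × (-π, π)`. -/
structure ConalEigenfunction (s c lam : ℝ) (f : ℝ → ℝ → ℝ) : Prop where
  continuous : Continuous fun z : ℝ × ℝ => f z.1 z.2
  pos : ∀ φ ∈ Ioo 0 π, ∀ ψ ∈ Ioo (-π) π, 0 < f φ ψ
  eq_zero : ∀ φ ψ, sin φ = 0 ∨ cos ψ = -1 → f φ ψ = 0
  equation : ∀ φ ∈ Ioo 0 π, ∀ ψ ∈ Ioo (-π) π, ∃ a b,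
    HasConalOpAt s (fun t => f t ψ) a φ ∧ HasConalOpAt c (fun t => f φ t) b ψ ∧
      a + b = -lam * conalWeight s c φ ψ * f φ ψ

theorem exists_isLocalMin_mul_sub {X : Type*} [TopologicalSpace X] {K : Set X} {p q : X → ℝ}
    (hK : IsCompact K) (hp : ContinuousOn p K) (hq : ContinuousOn q K) (hqpos : ∀ z ∈ K, 0 < q z)
    (hppos : ∃ z ∈ K, 0 < p z) (hnhds : ∀ z ∈ K, 0 < p z → K ∈ 𝓝 z) :
    ∃ z ∈ K, ∃ M, 0 < M ∧ 0 < p z ∧ p z = M * q z ∧ IsLocalMin (fun x => M * q x - p x) z := by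
  obtain ⟨z₁, hz₁, hp₁⟩ := hppos
  obtain ⟨z, hz, hmax⟩ :=
    hK.exists_isMaxOn ⟨z₁, hz₁⟩ (hp.div hq fun z hz => (hqpos z hz).ne')
  have hM : 0 < p z / q z := (div_pos hp₁ (hqpos z₁ hz₁)).trans_le (isMaxOn_iff.1 hmax z₁ hz₁)
  have hpz : p z = p z / q z * q z := (div_mul_cancel₀ _ (hqpos z hz).ne').symm
  have hpos : 0 < p z := hpz ▸ mul_pos hM (hqpos z hz)
  refine ⟨z, hz, p z / q z, hM, hpos, hpz, ?_⟩
  filter_upwards [hnhds z hz hpos] with x hx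
  have hx' : p x ≤ p z / q z * q x := (div_le_iff₀ (hqpos x hx)).1 (isMaxOn_iff.1 hmax x hx)
  rw [← hpz, sub_self]
  linarith

/-- The dependence on `φ` of the comparison functions: a perturbation of the first Dirichlet
eigenfunction `sin` making room for strict inequalities. -/
def sineBarrier (ε t : ℝ) : ℝ := sin t + ε * cos (2 * t)

theorem continuous_sineBarrier (ε : ℝ) : Continuous (sineBarrier ε) := by
  unfold sineBarrier
  fun_prop

theorem sineBarrier_pos {ε t : ℝ} (hε : 0 < ε) (hε1 : ε ≤ 1 / 2) (ht : 0 ≤ sin t) :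
    0 < sineBarrier ε t := by
  have h : 0 ≤ sin t * (1 - 2 * ε) := mul_nonneg ht (by linarith)
  have h' : 0 ≤ ε * (sin t * (1 - sin t)) :=
    mul_nonneg hε.le (mul_nonneg ht (sub_nonneg.2 (sin_le_one t)))
  rw [sineBarrier, cos_two_mul', cos_sq']
  linarith

theorem sineBarrier_of_sin_eq_zero {t : ℝ} (ε : ℝ) (ht : sin t = 0) : sineBarrier ε t = ε := by
  rw [sineBarrier, cos_two_mul', cos_sq', ht]
  ring

theorem exists_hasConalOpAt_sineBarrier {s ε t : ℝ} (hs : 0 ≤ s) (hs1 : s ≤ 1) (hε : ε ≤ 1 / 4)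
    (ht : 0 ≤ sin t) (hA : 0 ≤ sineBarrier ε t) :
    ∃ d ≤ 8 * sineBarrier ε t, HasConalOpAt s (sineBarrier ε)
      ((-1 + 2 * s - 2 * s * sin t ^ 2) * sineBarrier ε t + ε * d) t := by
  have hcos2 : HasSecondDerivAt (fun τ => cos (2 * τ)) (-2 * sin (2 * t)) (-4 * cos (2 * t)) t := by
    have h := (hasSecondDerivAt_cos (2 * t)).comp
      ((hasSecondDerivAt_quadratic 0 2 0 t).congr (.of_forall fun τ => by ring))
    exact h.congr_values (by ring) (by ring)
  refine ⟨-3 * cos (2 * t) + s * (2 * cos (2 * t) - 1) * (cos (2 * t) + 1), ?_, _, _,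
    (hasSecondDerivAt_sin t).add (hcos2.const_mul ε), ?_⟩
  · have hC : cos (2 * t) = 1 - 2 * sin t ^ 2 := by rw [cos_two_mul, cos_sq']; ring
    have hC1 : 0 ≤ cos (2 * t) + 1 := by linarith [neg_one_le_cos (2 * t)]
    have := sin_le_one t
    rcases le_total 0 (cos (2 * t)) with hC0 | hC0
    · have := cos_le_one (2 * t)
      have : s * (2 * cos (2 * t) - 1) ≤ 1 * cos (2 * t) := by nlinarith
      nlinarith
    · have hneg : s * ((1 - 2 * cos (2 * t)) * (cos (2 * t) + 1)) ≥ 0 :=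
        mul_nonneg hs (mul_nonneg (by linarith) hC1)
      have hS : 7 / 10 ≤ sin t := by nlinarith
      have hA' : sin t + cos (2 * t) / 4 ≤ sineBarrier ε t := by
        unfold sineBarrier
        nlinarith
      nlinarith
  · simp only [sineBarrier, sin_two_mul, cos_two_mul, sin_sq]
    ring_nf
    rw [sin_sq]
    ring

theorem conalWeight_pos {s c φ : ℝ} (hs : 0 < s) (hc : 0 ≤ c) (hφ : φ ∈ Ioo 0 π) (ψ : ℝ) :
    0 < conalWeight s c φ ψ := by
  have := sin_pos_of_mem_Ioo hφ
  unfold conalWeight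
  positivity

theorem Ioo_prod_subset_Icc_prod : Ioo 0 π ×ˢ Ioo (-π) π ⊆ Icc 0 π ×ˢ Icc (-π) π :=
  prod_mono Ioo_subset_Icc_self Ioo_subset_Icc_self

theorem midpoint_mem_Ioo_prod : (π / 2, (0 : ℝ)) ∈ Ioo 0 π ×ˢ Ioo (-π) π := by
  constructor <;> constructor <;> linarith [pi_pos]

theorem mem_Ioo_prod {z : ℝ × ℝ} (hz : z ∈ Icc 0 π ×ˢ Icc (-π) π) (hsin : sin z.1 ≠ 0)
    (hcos : cos z.2 ≠ -1) : z ∈ Ioo 0 π ×ˢ Ioo (-π) π :=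
  ⟨⟨hz.1.1.lt_of_ne fun h => hsin (by rw [← h, sin_zero]),
      hz.1.2.lt_of_ne fun h => hsin (by rw [h, sin_pi])⟩,
    hz.2.1.lt_of_ne fun h => hcos (by rw [← h, cos_neg, cos_pi]),
      hz.2.2.lt_of_ne fun h => hcos (by rw [h, cos_pi])⟩

namespace ConalEigenfunction

variable {s c lam lam' σ₀ : ℝ} {f : ℝ → ℝ → ℝ} {A B : ℝ → ℝ}

/- At a minimum of `A ⊗ B / f` the multiple of `A ⊗ B` touches `f` from above. -/
theorem exists_eigenvalue_le_op (hf : ConalEigenfunction s c lam f) (hs : s ≤ 1) (hc : c ≤ 1)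
    (hA : Continuous A) (hB : Continuous B) (hApos : ∀ φ ∈ Icc 0 π, 0 < A φ)
    (hBpos : ∀ ψ ∈ Icc (-π) π, 0 < B ψ) :
    ∃ φ ∈ Ioo 0 π, ∃ ψ ∈ Ioo (-π) π, ∀ a b, HasConalOpAt s A a φ → HasConalOpAt c B b ψ →
      -lam * conalWeight s c φ ψ * (A φ * B ψ) ≤ a * B ψ + A φ * b := by
  have hinterior : ∀ z ∈ Icc 0 π ×ˢ Icc (-π) π, 0 < f z.1 z.2 → z ∈ Ioo 0 π ×ˢ Ioo (-π) π :=
    fun z hz hfz => mem_Ioo_prod hz (fun h => hfz.ne' (hf.eq_zero _ _ (.inl h)))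
      fun h => hfz.ne' (hf.eq_zero _ _ (.inr h))
  obtain ⟨⟨φ, ψ⟩, hz, M, hM, hfpos, heq, hmin⟩ := exists_isLocalMin_mul_sub
    (p := fun z : ℝ × ℝ => f z.1 z.2) (q := fun z => A z.1 * B z.2)
    (isCompact_Icc.prod isCompact_Icc) hf.continuous.continuousOn (by fun_prop)
    (fun z hz => mul_pos (hApos _ hz.1) (hBpos _ hz.2))
    ⟨_, Ioo_prod_subset_Icc_prod midpoint_mem_Ioo_prod,
      hf.pos _ midpoint_mem_Ioo_prod.1 _ midpoint_mem_Ioo_prod.2⟩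
    fun z hz hfz => mem_of_superset
      ((isOpen_Ioo.prod isOpen_Ioo).mem_nhds (hinterior z hz hfz)) Ioo_prod_subset_Icc_prod
  obtain ⟨hφ, hψ⟩ := hinterior _ hz hfpos
  refine ⟨φ, hφ, ψ, hψ, fun a b hAop hBop => ?_⟩
  obtain ⟨a', b', ha', hb', hab'⟩ := hf.equation φ hφ ψ hψ
  have hleft := ((hAop.const_mul (M * B ψ)).sub ha').nonneg_of_isLocalMin hs (by
    simpa [Function.comp_def, mul_assoc, mul_comm (B ψ)] using
      hmin.comp_continuous (g := fun t => (t, ψ)) (by fun_prop))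
  have hright := ((hBop.const_mul (M * A φ)).sub hb').nonneg_of_isLocalMin hc (by
    simpa [Function.comp_def, mul_assoc] using
      hmin.comp_continuous (g := fun t => (φ, t)) (by fun_prop))
  refine le_of_mul_le_mul_left ?_ hM
  calc M * (-lam * conalWeight s c φ ψ * (A φ * B ψ))
      = -lam * conalWeight s c φ ψ * f φ ψ := by rw [show f φ ψ = _ from heq]; ring
    _ ≤ M * (a * B ψ + A φ * b) := by linarith

theorem exists_op_le_eigenvalue (hf : ConalEigenfunction s c lam f) (hs : s ≤ 1) (hc : c ≤ 1)
    (hA : Continuous A) (hB : Continuous B)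
    (hAneg : ∀ φ, sin φ = 0 → A φ < 0) (hBneg : ∀ ψ, cos ψ = -1 → B ψ < 0)
    (hAmid : 0 < A (π / 2)) (hBmid : 0 < B 0) :
    ∃ φ ∈ Ioo 0 π, ∃ ψ ∈ Ioo (-π) π, 0 < A φ ∧ 0 < B ψ ∧
      ∀ a b, HasConalOpAt s A a φ → HasConalOpAt c B b ψ →
        a * B ψ + A φ * b ≤ -lam * conalWeight s c φ ψ * (A φ * B ψ) := by
  set K := Icc 0 π ×ˢ Icc (-π) π ∩ ({z : ℝ × ℝ | 0 ≤ A z.1} ∩ {z | 0 ≤ B z.2})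
  have hK : IsCompact K := (isCompact_Icc.prod isCompact_Icc).inter_right
    ((isClosed_le continuous_const (hA.comp continuous_fst)).inter
      (isClosed_le continuous_const (hB.comp continuous_snd)))
  have hinterior : ∀ z ∈ K, z ∈ Ioo 0 π ×ˢ Ioo (-π) π := fun z hz => mem_Ioo_prod hz.1
    (fun h => (hAneg _ h).not_ge hz.2.1) fun h => (hBneg _ h).not_ge hz.2.2
  have hpos : ∀ z ∈ K, 0 < A z.1 * B z.2 → 0 < A z.1 ∧ 0 < B z.2 := fun z hz h =>
    ⟨hz.2.1.lt_of_ne' (left_ne_zero_of_mul h.ne'), hz.2.2.lt_of_ne' (right_ne_zero_of_mul h.ne')⟩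
  obtain ⟨⟨φ, ψ⟩, hz, M, _, hABpos, heq, hmin⟩ := exists_isLocalMin_mul_sub
    (p := fun z => A z.1 * B z.2) (q := fun z : ℝ × ℝ => f z.1 z.2) hK (by fun_prop)
    hf.continuous.continuousOn (fun z hz => hf.pos _ (hinterior z hz).1 _ (hinterior z hz).2)
    ⟨_, ⟨Ioo_prod_subset_Icc_prod midpoint_mem_Ioo_prod, hAmid.le, hBmid.le⟩, mul_pos hAmid hBmid⟩
    fun z hz hABz => by
      filter_upwards [(isOpen_Ioo.prod isOpen_Ioo).mem_nhds (hinterior z hz),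
        (hA.comp continuous_fst).continuousAt.eventually (lt_mem_nhds (hpos z hz hABz).1),
        (hB.comp continuous_snd).continuousAt.eventually (lt_mem_nhds (hpos z hz hABz).2)]
        with x hx hAx hBx using ⟨Ioo_prod_subset_Icc_prod hx, hAx.le, hBx.le⟩
  obtain ⟨hφ, hψ⟩ := hinterior _ hz
  obtain ⟨hAφ, hBψ⟩ := hpos _ hz hABpos
  refine ⟨φ, hφ, ψ, hψ, hAφ, hBψ, fun a b hAop hBop => ?_⟩
  obtain ⟨a', b', ha', hb', hab'⟩ := hf.equation φ hφ ψ hψ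
  have hleft := ((ha'.const_mul M).sub (hAop.const_mul (B ψ))).nonneg_of_isLocalMin hs (by
    simpa [Function.comp_def, mul_comm (B ψ)] using
      hmin.comp_continuous (g := fun t => (t, ψ)) (by fun_prop))
  have hright := ((hb'.const_mul M).sub (hBop.const_mul (A φ))).nonneg_of_isLocalMin hc (by
    simpa [Function.comp_def] using hmin.comp_continuous (g := fun t => (φ, t)) (by fun_prop))
  calc a * B ψ + A φ * b ≤ M * (a' + b') := by linarith
    _ = -lam * conalWeight s c φ ψ * (A φ * B ψ) := by
      rw [hab', show A φ * B ψ = _ from heq]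
      ring

theorem le_of_supersolution (hf : ConalEigenfunction s c lam f) (hs : 0 < s) (hc : 0 ≤ c)
    (hsc : s + c = 1) (hlam' : lam' ≤ 2) (hσ₀ : 0 < σ₀) (hB : Continuous B)
    (hBpos : ∀ ψ ∈ Icc (-π) π, 0 < B ψ)
    (hBsuper : ∀ ψ ∈ Ioo (-π) π, ∃ b ≤ (1 - 2 * s - lam' * c * sin ψ ^ 2 - σ₀) * B ψ,
      HasConalOpAt c B b ψ) :
    lam' ≤ lam := by
  obtain ⟨ε, hε, hε1⟩ := exists_between (show 0 < min (1 / 4) (σ₀ / 8) by positivity)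
  obtain ⟨hε1, hε2⟩ := lt_min_iff.1 hε1
  have hApos : ∀ φ ∈ Icc 0 π, 0 < sineBarrier ε φ := fun φ hφ =>
    sineBarrier_pos hε (by linarith) (sin_nonneg_of_mem_Icc hφ)
  obtain ⟨φ, hφ, ψ, hψ, htouch⟩ := hf.exists_eigenvalue_le_op (by linarith) (by linarith)
    (continuous_sineBarrier ε) hB hApos hBpos
  have hA := hApos φ (Ioo_subset_Icc_self hφ)
  have hBψ := hBpos ψ (Ioo_subset_Icc_self hψ)
  obtain ⟨b, hb, hBop⟩ := hBsuper ψ hψ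
  obtain ⟨d, hd, hAop⟩ := exists_hasConalOpAt_sineBarrier hs.le (by linarith) hε1.le
    (sin_pos_of_mem_Ioo hφ).le hA.le
  have hcancel : ε * d ≤ σ₀ * sineBarrier ε φ := by nlinarith
  refine le_of_mul_le_mul_right (le_of_mul_le_mul_right (a := sineBarrier ε φ * B ψ) ?_
    (mul_pos hA hBψ)) (conalWeight_pos hs hc hφ ψ)
  have hlam : 0 ≤ (2 - lam') * (s * sin φ ^ 2) * (sineBarrier ε φ * B ψ) := by
    have := sub_nonneg.2 hlam'
    positivity
  have := htouch _ _ hAop hBop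
  have := mul_le_mul_of_nonneg_left hb hA.le
  have := mul_le_mul_of_nonneg_right hcancel hBψ.le
  unfold conalWeight at *
  linarith

theorem le_of_subsolution (hf : ConalEigenfunction s c lam f) (hs : 0 < s) (hc : 0 ≤ c)
    (hsc : s + c = 1) (hlam' : lam' ≤ 2) (hσ₀ : 0 < σ₀) (hB : Continuous B)
    (hBneg : ∀ ψ, cos ψ = -1 → B ψ < 0) (hBmid : 0 < B 0)
    (hBsub : ∀ ψ ∈ Ioo (-π) π, 0 < B ψ →
      ∃ b, (1 - 2 * s - lam' * c * sin ψ ^ 2 + (2 - lam') * s + σ₀) * B ψ ≤ b ∧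
        HasConalOpAt c B b ψ) :
    lam ≤ lam' := by
  obtain ⟨ε, hε, hε1⟩ := exists_between (show 0 < min (1 / 4) (σ₀ / 8) by positivity)
  obtain ⟨hε1, hε2⟩ := lt_min_iff.1 hε1
  have hAmid : 0 < sineBarrier (-ε) (π / 2) := by
    rw [sineBarrier, sin_pi_div_two, mul_div_cancel₀ _ two_ne_zero, cos_pi]
    linarith
  obtain ⟨φ, hφ, ψ, hψ, hA, hBψ, htouch⟩ := hf.exists_op_le_eigenvalue (by linarith) (by linarith)
    (continuous_sineBarrier (-ε)) hB
    (fun φ h => by rw [sineBarrier_of_sin_eq_zero _ h]; linarith) hBneg hAmid hBmid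
  obtain ⟨b, hb, hBop⟩ := hBsub ψ hψ hBψ
  obtain ⟨d, hd, hAop⟩ := exists_hasConalOpAt_sineBarrier hs.le (by linarith) (by linarith)
    (sin_pos_of_mem_Ioo hφ).le hA.le
  have hcancel : ε * d ≤ σ₀ * sineBarrier (-ε) φ := by nlinarith
  refine le_of_mul_le_mul_right (le_of_mul_le_mul_right (a := sineBarrier (-ε) φ * B ψ) ?_
    (mul_pos hA hBψ)) (conalWeight_pos hs hc hφ ψ)
  have hlam : 0 ≤ (2 - lam') * (s * cos φ ^ 2) * (sineBarrier (-ε) φ * B ψ) := by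
    have := sub_nonneg.2 hlam'
    positivity
  rw [cos_sq'] at hlam
  have := htouch _ _ hAop hBop
  have := mul_le_mul_of_nonneg_left hb hA.le
  have := mul_le_mul_of_nonneg_right hcancel hBψ.le
  unfold conalWeight at *
  linarith

end ConalEigenfunction

section ConalOperator

variable {c ψ : ℝ}

theorem hasConalOpAt_comp_cos (c : ℝ) {F : ℝ → ℝ} {F₁ F₂ : ℝ}
    (hF : HasSecondDerivAt F F₁ F₂ (cos ψ)) :
    HasConalOpAt c (fun t => F (cos t))
      ((1 - c * cos ψ ^ 2) * (1 - cos ψ ^ 2) * F₂ -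
        (1 + c - 2 * c * cos ψ ^ 2) * cos ψ * F₁) ψ := by
  refine ⟨_, _, hF.comp (hasSecondDerivAt_cos ψ), ?_⟩
  linear_combination ((1 - c * cos ψ ^ 2) * F₂ - c * cos ψ * F₁) * sin_sq_add_cos_sq ψ

theorem hasConalOpAt_sqrt_comp_cos (c : ℝ) {T : ℝ → ℝ} {T₁ T₂ : ℝ}
    (hT : HasSecondDerivAt T T₁ T₂ (cos ψ)) (hpos : 0 < T (cos ψ)) :
    HasConalOpAt c (fun t => √(T (cos t)))
      (((1 - c * cos ψ ^ 2) * (1 - cos ψ ^ 2) * (2 * T (cos ψ) * T₂ - T₁ ^ 2) -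
        2 * (1 + c - 2 * c * cos ψ ^ 2) * cos ψ * T (cos ψ) * T₁) /
          (4 * T (cos ψ) * √(T (cos ψ)))) ψ := by
  obtain ⟨r₂, hr, hr₂⟩ := hT.exists_sqrt hpos
  obtain ⟨g₁, g₂, hg, h⟩ := hasConalOpAt_comp_cos c hr
  refine ⟨g₁, g₂, hg, h.trans ?_⟩
  have hsqrt := Real.sqrt_pos.2 hpos
  have hsq := Real.sq_sqrt hpos.le
  set r := √(T (cos ψ))
  rw [← hsq]
  have hr₂' : r₂ = (2 * r ^ 2 * T₂ - T₁ ^ 2) / (4 * r ^ 3) := by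
    field_simp at hr₂ ⊢
    linear_combination hr₂
  rw [hr₂']
  field_simp
  ring

theorem one_sub_mul_cos_sq_pos (hc : c < 1) (t : ℝ) : 0 < 1 - c * cos t ^ 2 := by
  rcases (cos_sq_le_one t).eq_or_lt with h | h
  · rw [h]; linarith
  · nlinarith [mul_nonneg (sub_nonneg.2 hc.le) (sq_nonneg (cos t))]

/- Reduction of order: `sin` solves `L g = (2 * c * cos² - 1) * g`, so only the derivatives of the
integral contribute. -/
theorem hasConalOpAt_sin_mul_integral (hc : c < 1) {w : ℝ → ℝ} {w₁ : ℝ} (hw : Continuous w)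
    (hw₁ : HasDerivAt w w₁ (cos ψ)) :
    HasConalOpAt c (fun t => sin t * ∫ τ in 0..t, w (cos τ) / √(1 - c * cos τ ^ 2))
      ((2 * c * cos ψ ^ 2 - 1) * (sin ψ * ∫ τ in 0..ψ, w (cos τ) / √(1 - c * cos τ ^ 2)) +
        √(1 - c * cos ψ ^ 2) * (2 * cos ψ * w (cos ψ) - sin ψ ^ 2 * w₁)) ψ := by
  have hpos : ∀ t, 0 < √(1 - c * cos t ^ 2) := fun t =>
    Real.sqrt_pos.2 (one_sub_mul_cos_sq_pos hc t)
  obtain ⟨r₂, hr, -⟩ := exists_hasSecondDerivAt_sqrt_conal (one_sub_mul_cos_sq_pos hc ψ)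
  have hcont : Continuous fun τ => w (cos τ) / √(1 - c * cos τ ^ 2) := by
    fun_prop (disch := exact fun t => (hpos t).ne')
  have hint := HasSecondDerivAt.of_forall
    (fun t => (intervalIntegral.integral_hasDerivAt_right (hcont.intervalIntegrable 0 t)
      hcont.stronglyMeasurable.stronglyMeasurableAtFilter hcont.continuousAt))
    ((hw₁.comp ψ (hasDerivAt_cos ψ)).div hr.hasDerivAt (hpos ψ).ne')
  refine ⟨_, _, (hasSecondDerivAt_sin ψ).mul hint, ?_⟩
  have hsq := Real.sq_sqrt (one_sub_mul_cos_sq_pos hc ψ).le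
  have hposψ := hpos ψ
  set Q := ∫ τ in 0..ψ, w (cos τ) / √(1 - c * cos τ ^ 2)
  set r := √(1 - c * cos ψ ^ 2)
  simp only [Function.comp_apply]
  rw [← hsq]
  field_simp
  linear_combination (-sin ψ * Q * r) * hsq

end ConalOperator

/-- The radicand of the leading term of `profile`, as a function of `x = cos ψ`. At `x = -1` it
vanishes, which makes the leading term behave like the square root of the distance to the slit. -/
def profileRadicand (s x : ℝ) : ℝ := 1 - (1 - s) * x ^ 2 - s / 8 * (1 - x) ^ 3

/-- The numerator in the integrand of the second term of `profile`, as a function of `x = cos ψ`. -/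
def profileKernel (s x : ℝ) : ℝ := -(s / 16) * ((5 - x) * (1 + x))

/-- The dependence on `ψ` of the comparison functions. The square root solves the conal equation
for `lam = 2 - 3 / 4 * s` up to a residual of order `s`, which the integral compensates for up to a
residual of order `s ^ 2`; the terms with `κ` and `a` give the remaining residual a sign. -/
def profile (s κ a ψ : ℝ) : ℝ :=
  √(profileRadicand s (cos ψ)) +
    (1 + κ) * (sin ψ * ∫ t in 0..ψ, profileKernel s (cos t) / √(1 - (1 - s) * cos t ^ 2)) +
    a * (1 - cos ψ) ^ 2

/-- The quotient of `profileRadicand` by `1 + x`, as a function of `y = 1 - x`. -/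
def profileCofactor (s y : ℝ) : ℝ := y + s / 8 * (4 - 6 * y + y ^ 2)

/-- The residual of order `s ^ 2` left by the leading term of `profile`, up to a denominator, as a
function of `y = 1 - cos ψ`. -/
def profileRemainder (s y : ℝ) : ℝ :=
  y ^ 2 * (s ^ 2 * (-y / 16 + 5 * y ^ 2 / 64 + 3 * y ^ 3 / 64 - 9 * y ^ 4 / 256) +
    s ^ 3 * (-3 / 64 + 3 * y / 32 - 9 * y ^ 2 / 256 - 3 * y ^ 3 / 64 + y ^ 4 / 32 - y ^ 5 / 256))

/-- The residual of order `s` compensated for by the integral term of `profile`, as a function of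
`y = 1 - cos ψ`. -/
def profileForcing (y : ℝ) : ℝ := (2 - y) * (-2 + 2 * y + y ^ 2)

/-- The contribution of `(1 - cos ψ) ^ 2` to the residual, as a function of `y = 1 - cos ψ`. -/
def profileCorrection (s y : ℝ) : ℝ :=
  y ^ 2 * (3 - 2 * y) * (5 - 2 * y) + s * y * (6 - 18 * y + 16 * y ^ 2 - 4 * y ^ 3)

/-- The residual of `profile` in the conal equation for `lam = 2 - 3 / 4 * s`, with the term
`3 / 4 * s * sin ψ ^ 2` acting on the leading term only, as a function of `x = cos ψ`. -/
def profileResidual (s κ a x : ℝ) : ℝ :=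
  √(profileRadicand s x) * (profileRemainder s (1 - x) / profileCofactor s (1 - x) ^ 2) +
    s / 4 * profileForcing (1 - x) *
      ((1 + κ) * √(1 - (1 - s) * x ^ 2) - √(profileRadicand s x)) +
    a * profileCorrection s (1 - x)

section Profile

variable {s ψ : ℝ}

theorem profileRadicand_eq (s x : ℝ) :
    profileRadicand s x = (1 + x) * profileCofactor s (1 - x) := by
  unfold profileRadicand profileCofactor
  ring

theorem continuous_profile (hs : 0 < s) (κ a : ℝ) : Continuous (profile s κ a) := by
  have hroot : ∀ t, √(1 - (1 - s) * cos t ^ 2) ≠ 0 := fun t =>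
    (Real.sqrt_pos.2 (one_sub_mul_cos_sq_pos (by linarith) t)).ne'
  have hprimitive : Continuous fun ψ =>
      ∫ t in 0..ψ, profileKernel s (cos t) / √(1 - (1 - s) * cos t ^ 2) := by
    refine intervalIntegral.continuous_primitive (fun _ _ => Continuous.intervalIntegrable ?_ _ _) 0
    unfold profileKernel
    fun_prop (disch := exact hroot)
  unfold profile profileRadicand
  fun_prop

theorem le_profileCofactor {y : ℝ} (hs : 0 ≤ s) :
    (1 - s) * y + s / 2 + s * y / 4 ≤ profileCofactor s y := by
  unfold profileCofactor
  linarith [mul_nonneg hs (sq_nonneg y)]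

theorem profileCofactor_pos {y : ℝ} (hs : 0 < s) (hs1 : s < 1) (hy : 0 ≤ y) :
    0 < profileCofactor s y := by
  have := le_profileCofactor (y := y) hs.le
  linarith [mul_nonneg (sub_nonneg.2 hs1.le) hy, mul_nonneg hs.le hy]

theorem profileRadicand_pos {x : ℝ} (hs : 0 < s) (hs1 : s < 1) (hx : -1 < x) (hx1 : x ≤ 1) :
    0 < profileRadicand s x := by
  rw [profileRadicand_eq]
  exact mul_pos (by linarith) (profileCofactor_pos hs hs1 (sub_nonneg.2 hx1))

theorem hasSecondDerivAt_profileRadicand (s x : ℝ) :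
    HasSecondDerivAt (profileRadicand s) (-2 * (1 - s) * x + 3 / 8 * s * (1 - x) ^ 2)
      (-2 * (1 - s) - 3 / 4 * s * (1 - x)) x := by
  have hcube := (hasSecondDerivAt_quadratic 1 (-1) 0 x).mul (hasSecondDerivAt_quadratic 1 (-2) 1 x)
  have h := (hasSecondDerivAt_quadratic 1 0 (-(1 - s)) x).sub (hcube.const_mul (s / 8))
  exact (h.congr_values (by ring) (by ring)).congr
    (.of_forall fun τ => by simp only [profileRadicand]; ring)

theorem profileRadicand_identity (s x : ℝ) :
    (1 - (1 - s) * x ^ 2) * (1 - x ^ 2) *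
          (2 * profileRadicand s x * (-2 * (1 - s) - 3 / 4 * s * (1 - x)) -
            (-2 * (1 - s) * x + 3 / 8 * s * (1 - x) ^ 2) ^ 2) -
        2 * (1 + (1 - s) - 2 * (1 - s) * x ^ 2) * x * profileRadicand s x *
          (-2 * (1 - s) * x + 3 / 8 * s * (1 - x) ^ 2) =
      4 * (profileRadicand s x ^ 2 * (1 - 2 * s - (2 - 3 / 4 * s - 2 * s) * (1 - x ^ 2) -
          s / 4 * profileForcing (1 - x)) + (1 + x) ^ 2 * profileRemainder s (1 - x)) := by
  unfold profileRadicand profileForcing profileRemainder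
  ring

theorem hasConalOpAt_sqrt_profileRadicand (hs : 0 < s) (hs1 : s < 1) (hψ : -1 < cos ψ) :
    HasConalOpAt (1 - s) (fun t => √(profileRadicand s (cos t)))
      (√(profileRadicand s (cos ψ)) *
        (1 - 2 * s - (2 - 3 / 4 * s - 2 * s) * sin ψ ^ 2 - s / 4 * profileForcing (1 - cos ψ) +
          profileRemainder s (1 - cos ψ) / profileCofactor s (1 - cos ψ) ^ 2)) ψ := by
  have hcofactor : 0 < profileCofactor s (1 - cos ψ) :=
    profileCofactor_pos hs hs1 (sub_nonneg.2 (cos_le_one ψ))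
  have hpos := profileRadicand_pos hs hs1 hψ (cos_le_one ψ)
  convert hasConalOpAt_sqrt_comp_cos (1 - s) (hasSecondDerivAt_profileRadicand s _) hpos using 1
  have : 0 < 1 + cos ψ := by linarith
  rw [profileRadicand_identity, ← sin_sq]
  have hsqrt := Real.sqrt_pos.2 hpos
  have hsq := Real.sq_sqrt hpos.le
  rw [profileRadicand_eq] at hsqrt hsq ⊢
  set R := √((1 + cos ψ) * profileCofactor s (1 - cos ψ))
  field_simp
  rw [hsq]
  ring

theorem hasConalOpAt_sin_mul_integral_profileKernel (hs : 0 < s) (ψ : ℝ) :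
    HasConalOpAt (1 - s)
      (fun t => sin t * ∫ τ in 0..t, profileKernel s (cos τ) / √(1 - (1 - s) * cos τ ^ 2))
      ((1 - 2 * s - 2 * (1 - s) * sin ψ ^ 2) *
          (sin ψ * ∫ τ in 0..ψ, profileKernel s (cos τ) / √(1 - (1 - s) * cos τ ^ 2)) +
        s / 4 * profileForcing (1 - cos ψ) * √(1 - (1 - s) * cos ψ ^ 2)) ψ := by
  have hderiv : HasDerivAt (profileKernel s) (-(s / 16) * (4 - 2 * cos ψ)) (cos ψ) :=
    (((hasDerivAt_id _).const_sub 5).mul ((hasDerivAt_id _).const_add 1)).const_mul (-(s / 16))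
      |>.congr_deriv (by ring)
  convert hasConalOpAt_sin_mul_integral (c := 1 - s) (by linarith)
    (by unfold profileKernel; fun_prop) hderiv using 1
  simp only [profileForcing, profileKernel, sin_sq]
  ring

theorem hasConalOpAt_one_sub_cos_sq (s ψ : ℝ) :
    HasConalOpAt (1 - s) (fun t => (1 - cos t) ^ 2)
      ((1 - 2 * s - 2 * (1 - s) * sin ψ ^ 2) * (1 - cos ψ) ^ 2 +
        profileCorrection s (1 - cos ψ)) ψ := by
  have h := (hasSecondDerivAt_quadratic 1 (-2) 1 (cos ψ)).congr (g := fun x => (1 - x) ^ 2)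
    (.of_forall fun x => by ring)
  convert hasConalOpAt_comp_cos (1 - s) h using 1
  simp only [profileCorrection, sin_sq]
  ring

theorem hasConalOpAt_profile (hs : 0 < s) (hs1 : s < 1) (κ a : ℝ) (hψ : -1 < cos ψ) :
    HasConalOpAt (1 - s) (profile s κ a)
      ((1 - 2 * s - 2 * (1 - s) * sin ψ ^ 2) * profile s κ a ψ +
        3 / 4 * s * sin ψ ^ 2 * √(profileRadicand s (cos ψ)) +
        profileResidual s κ a (cos ψ)) ψ := by
  have h : HasConalOpAt (1 - s) (profile s κ a) _ ψ :=
    ((hasConalOpAt_sqrt_profileRadicand hs hs1 hψ).add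
      ((hasConalOpAt_sin_mul_integral_profileKernel hs ψ).const_mul (1 + κ))).add
      ((hasConalOpAt_one_sub_cos_sq s ψ).const_mul a)
  convert h using 1
  unfold profile profileResidual
  ring

end Profile

section ResidualEstimates

variable {q y R P : ℝ}

theorem abs_profileRemainder_le {s : ℝ} (hs : 0 ≤ s) (hs1 : s ≤ 1 / 1000) (hy : 0 ≤ y)
    (hy2 : y ≤ 2) :
    |profileRemainder s y| ≤ s ^ 2 * profileCofactor s y ^ 2 := by
  have hcofactor : 999 / 1000 * y ≤ profileCofactor s y := by
    linarith [le_profileCofactor (y := y) hs, mul_nonneg hs hy,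
      mul_le_mul_of_nonneg_right hs1 hy]
  have h2 : y ^ 2 ≤ 2 ^ 2 := by gcongr
  have h3 : y ^ 3 ≤ 2 ^ 3 := by gcongr
  have h4 : y ^ 4 ≤ 2 ^ 4 := by gcongr
  have h5 : y ^ 5 ≤ 2 ^ 5 := by gcongr
  have p2 := pow_nonneg hy 2
  have p3 := pow_nonneg hy 3
  have p4 := pow_nonneg hy 4
  have p5 := pow_nonneg hy 5
  have hA : |-y / 16 + 5 * y ^ 2 / 64 + 3 * y ^ 3 / 64 - 9 * y ^ 4 / 256| ≤ 7 / 10 :=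
    abs_le.2 ⟨by linarith, by linarith⟩
  have hC : |-3 / 64 + 3 * y / 32 - 9 * y ^ 2 / 256 - 3 * y ^ 3 / 64 + y ^ 4 / 32 - y ^ 5 / 256|
      ≤ 2 := abs_le.2 ⟨by linarith, by linarith⟩
  unfold profileRemainder
  set A := -y / 16 + 5 * y ^ 2 / 64 + 3 * y ^ 3 / 64 - 9 * y ^ 4 / 256
  set C := -3 / 64 + 3 * y / 32 - 9 * y ^ 2 / 256 - 3 * y ^ 3 / 64 + y ^ 4 / 32 - y ^ 5 / 256
  have hAC : |A + s * C| ≤ 8 / 10 := calc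
    |A + s * C| ≤ |A| + s * |C| := by
      simpa only [abs_mul, abs_of_nonneg hs] using abs_add_le A (s * C)
    _ ≤ 7 / 10 + 1 / 1000 * 2 := by gcongr
    _ ≤ 8 / 10 := by norm_num
  calc |y ^ 2 * (s ^ 2 * A + s ^ 3 * C)| = s ^ 2 * (y ^ 2 * |A + s * C|) := by
        rw [show y ^ 2 * (s ^ 2 * A + s ^ 3 * C) = s ^ 2 * (y ^ 2 * (A + s * C)) by ring, abs_mul,
          abs_mul, abs_of_nonneg (sq_nonneg s), abs_of_nonneg p2]
    _ ≤ s ^ 2 * (y ^ 2 * (8 / 10)) := by gcongr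
    _ ≤ s ^ 2 * (999 / 1000 * y) ^ 2 := by gcongr; linarith
    _ ≤ s ^ 2 * profileCofactor s y ^ 2 := by gcongr

theorem le_profileRadicand {s x : ℝ} (hs : 0 ≤ s) (hs1 : s ≤ 1 / 100) (hx : -1 ≤ x)
    (hx1 : x ≤ 1) : 99 / 100 * (1 - x ^ 2) ≤ profileRadicand s x := by
  have hcofactor : 99 / 100 * (1 - x) ≤ profileCofactor s (1 - x) := by
    linarith [le_profileCofactor (y := 1 - x) hs, mul_nonneg hs (sub_nonneg.2 hx1),
      mul_le_mul_of_nonneg_right hs1 (sub_nonneg.2 hx1)]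
  rw [profileRadicand_eq]
  calc 99 / 100 * (1 - x ^ 2) = (1 + x) * (99 / 100 * (1 - x)) := by ring
    _ ≤ (1 + x) * profileCofactor s (1 - x) :=
      mul_le_mul_of_nonneg_left hcofactor (by linarith)

theorem abs_profileForcing_le (hy : 0 ≤ y) (hy2 : y ≤ 2) : |profileForcing y| ≤ 6 * (2 - y) := by
  have hfactor : |-2 + 2 * y + y ^ 2| ≤ 6 := abs_le.2 ⟨by nlinarith, by nlinarith⟩
  rw [profileForcing, abs_mul, abs_of_nonneg (sub_nonneg.2 hy2), mul_comm]
  exact mul_le_mul_of_nonneg_right hfactor (sub_nonneg.2 hy2)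

theorem profileForcing_le (hy : 0 ≤ y) : profileForcing y ≤ -4 + 6 * y := by
  unfold profileForcing
  linarith [pow_nonneg hy 3]

theorem profileCorrection_le {s : ℝ} (hs : 0 ≤ s) :
    profileCorrection s y ≤ y ^ 2 * ((3 - 2 * y) * (5 - 2 * y)) + 6 * s * y := by
  have h : 0 ≤ s * y ^ 2 * (18 - 16 * y + 4 * y ^ 2) :=
    mul_nonneg (by positivity) (by nlinarith [sq_nonneg (y - 2)])
  unfold profileCorrection
  linarith

theorem abs_profileForcing_mul_sub_le (hy : 0 ≤ y) (hy2 : y ≤ 2) (hR : 0 < R) (hRP : R ≤ P)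
    (hRy : 99 / 100 * (y * (2 - y)) ≤ R ^ 2) (hPR : P ^ 2 = R ^ 2 + q ^ 2 / 8 * y ^ 3) :
    |profileForcing y| * (P - R) ≤ 16 / 10 * q ^ 2 * R := by
  have hgap : P - R ≤ q ^ 2 * y ^ 3 / (16 * R) := by
    rw [le_div_iff₀ (by positivity)]
    nlinarith [sq_nonneg (P - R)]
  calc |profileForcing y| * (P - R)
      ≤ 6 * (2 - y) * (q ^ 2 * y ^ 3 / (16 * R)) :=
        mul_le_mul (abs_profileForcing_le hy hy2) hgap (sub_nonneg.2 hRP) (by linarith)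
    _ = 3 / 8 * (q ^ 2 * y ^ 2) * (y * (2 - y)) / R := by field_simp; ring
    _ ≤ 3 / 8 * (q ^ 2 * 2 ^ 2) * (100 / 99 * R ^ 2) / R := by
        have hy2R : y * (2 - y) ≤ 100 / 99 * R ^ 2 := by linarith
        have : 0 ≤ y * (2 - y) := mul_nonneg hy (by linarith)
        generalize y * (2 - y) = z at *
        gcongr
    _ ≤ 16 / 10 * q ^ 2 * R := by
        rw [div_le_iff₀ hR]
        nlinarith [mul_nonneg (sq_nonneg q) (sq_nonneg R)]

theorem profileCorrection_add_le_of_le (hq : 0 < q) (hq1 : q ≤ 1 / 1000) (hy : 0 ≤ y)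
    (hy2 : y ≤ 7 / 4) (hR : 0 < R) (hRy : 99 / 100 * (y * (2 - y)) ≤ R ^ 2) :
    profileCorrection (q ^ 2) y + 10 * q * R * profileForcing y + 9 / 2 * q * R + 2 * q ^ 4 * y ^ 2
      ≤ 30 * (y * (2 - y)) * R := by
  have hyR : 37 / 100 * y ≤ R := by
    refine le_of_abs_le (abs_le_of_sq_le_sq ?_ hR.le)
    nlinarith
  have hcorrection : y ^ 2 * ((3 - 2 * y) * (5 - 2 * y)) ≤ 28 * (y * (2 - y)) * R := calc
    y ^ 2 * ((3 - 2 * y) * (5 - 2 * y)) ≤ y ^ 2 * (10 * (2 - y)) :=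
      mul_le_mul_of_nonneg_left (by nlinarith) (sq_nonneg y)
    _ = 10 * (y * (2 - y)) * y := by ring
    _ ≤ 10 * (y * (2 - y)) * (100 / 37 * R) := by
      have : 0 ≤ 2 - y := by linarith
      gcongr
      linarith
    _ ≤ 28 * (y * (2 - y)) * R := by
      have : 0 ≤ y * (2 - y) * R := mul_nonneg (mul_nonneg hy (by linarith)) hR.le
      linarith
  have hforcing : 10 * q * R * profileForcing y ≤ 10 * q * R * (-4 + 6 * y) :=
    mul_le_mul_of_nonneg_left (profileForcing_le hy) (by positivity)
  have hqy : q ^ 2 * y ≤ 1 / 300 * (q * R) := by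
    calc q ^ 2 * y = q * q * y := by ring
      _ ≤ q * (1 / 1000) * (100 / 37 * R) := by gcongr; linarith
      _ ≤ 1 / 300 * (q * R) := by linarith [mul_pos hq hR]
  have hqy2 : q ^ 4 * y ^ 2 ≤ q ^ 2 * y := by
    calc q ^ 4 * y ^ 2 = q ^ 2 * y * (q ^ 2 * y) := by ring
      _ ≤ q ^ 2 * y * 1 := by gcongr; nlinarith
      _ = q ^ 2 * y := mul_one _
  have hslack : 60 * q * R * y ≤ 2 * (y * (2 - y)) * R := by
    calc 60 * q * R * y = y * (60 * q) * R := by ring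
      _ ≤ y * (2 * (2 - y)) * R :=
        mul_le_mul_of_nonneg_right (mul_le_mul_of_nonneg_left (by linarith) hy) hR.le
      _ = 2 * (y * (2 - y)) * R := by ring
  linarith [profileCorrection_le (y := y) (sq_nonneg q), mul_pos hq hR]

theorem profileCorrection_add_le_of_ge (hq : 0 < q) (hq1 : q ≤ 1 / 1000) (hy : 7 / 4 ≤ y)
    (hy2 : y ≤ 2) (hR : 0 < R) (hR1 : R ≤ 1) :
    profileCorrection (q ^ 2) y + 10 * q * R * profileForcing y + 9 / 2 * q * R + 2 * q ^ 4 * y ^ 2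
      ≤ 30 * (y * (2 - y)) * R := by
  have hfactor : 3 / 4 ≤ (2 * y - 3) * (5 - 2 * y) := by nlinarith
  have hcorrection : y ^ 2 * ((3 - 2 * y) * (5 - 2 * y)) ≤ -2 := by nlinarith
  have hforcing : profileForcing y ≤ 3 / 2 := by
    linarith [(le_abs_self _).trans (abs_profileForcing_le (by linarith) hy2)]
  have hqR : q * R ≤ 1 / 1000 * 1 := by gcongr
  have hqforcing : q * R * profileForcing y ≤ q * R * (3 / 2) := by gcongr
  have hq2 : q ^ 2 ≤ (1 / 1000) ^ 2 := by gcongr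
  have hqy : q ^ 2 * y ≤ (1 / 1000) ^ 2 * 2 := by gcongr
  have hqy2 : q ^ 4 * y ^ 2 ≤ (1 / 1000) ^ 4 * 2 ^ 2 := by gcongr
  have hright : 0 ≤ y * (2 - y) * R :=
    mul_nonneg (mul_nonneg (by linarith) (by linarith)) hR.le
  linarith [profileCorrection_le (y := y) (sq_nonneg q)]

theorem residual_bound (hq : 0 < q) (hq1 : q ≤ 1 / 1000) (hy : 0 ≤ y) (hy2 : y ≤ 2) (hR : 0 < R)
    (hRP : R ≤ P) (hP : P ≤ 1) (hRy : 99 / 100 * (y * (2 - y)) ≤ R ^ 2)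
    (hPR : P ^ 2 = R ^ 2 + q ^ 2 / 8 * y ^ 3) :
    q ^ 4 * R + q ^ 2 / 4 * (|profileForcing y| * (P - R)) + 10 * q ^ 4 * P * profileForcing y +
      q ^ 3 * profileCorrection (q ^ 2) y ≤
      30 * q ^ 3 * (y * (2 - y)) * R - 3 * q ^ 4 * R - 2 * q ^ 7 * y ^ 2 := by
  have hgap := abs_profileForcing_mul_sub_le hy hy2 hR hRP hRy hPR
  have hmain : profileCorrection (q ^ 2) y + 10 * q * R * profileForcing y + 9 / 2 * q * R +
      2 * q ^ 4 * y ^ 2 ≤ 30 * (y * (2 - y)) * R := by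
    rcases le_total y (7 / 4) with h | h
    · exact profileCorrection_add_le_of_le hq hq1 hy h hR hRy
    · exact profileCorrection_add_le_of_ge hq hq1 h hy2 hR (hRP.trans hP)
  have hP : profileForcing y * (P - R) ≤ |profileForcing y| * (P - R) :=
    mul_le_mul_of_nonneg_right (le_abs_self _) (sub_nonneg.2 hRP)
  have hq6 : q ^ 6 * R ≤ 1 / 1000 * (q ^ 4 * R) := by
    calc q ^ 6 * R = q ^ 2 * (q ^ 4 * R) := by ring
      _ ≤ 1 / 1000 * (q ^ 4 * R) := by gcongr; nlinarith
  have hq2 := mul_le_mul_of_nonneg_left hgap (sq_nonneg q)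
  have hq4 := mul_le_mul_of_nonneg_left (hP.trans hgap) (pow_nonneg hq.le 4)
  have hq3 := mul_le_mul_of_nonneg_left hmain (pow_nonneg hq.le 3)
  have : 0 < q ^ 4 * R := by positivity
  linarith

end ResidualEstimates

section Barriers

variable {q ψ κ ε : ℝ}

theorem mul_residual_le {y R P N : ℝ} (hε : |ε| = 1) (hq : 0 < q) (hq1 : q ≤ 1 / 1000)
    (hy : 0 ≤ y) (hy2 : y ≤ 2) (hR : 0 < R) (hRP : R ≤ P) (hP : P ≤ 1)
    (hRy : 99 / 100 * (y * (2 - y)) ≤ R ^ 2) (hPR : P ^ 2 = R ^ 2 + q ^ 2 / 8 * y ^ 3)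
    (hN : |N| ≤ q ^ 4) :
    ε * (R * N + q ^ 2 / 4 * profileForcing y * ((1 + ε * (40 * q ^ 2)) * P - R) +
        ε * q ^ 3 * profileCorrection (q ^ 2) y) ≤
      30 * q ^ 3 * (y * (2 - y)) * R - 3 * q ^ 4 * R - 2 * q ^ 7 * y ^ 2 := by
  have hεε : ε * ε = 1 := by rw [← abs_mul_abs_self, hε, one_mul]
  have hremainder : ε * (R * N) ≤ q ^ 4 * R := calc
    ε * (R * N) ≤ |ε * (R * N)| := le_abs_self _
    _ = R * |N| := by rw [abs_mul, hε, one_mul, abs_mul, abs_of_pos hR]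
    _ ≤ R * q ^ 4 := by gcongr
    _ = q ^ 4 * R := mul_comm _ _
  have hforcing : ε * (profileForcing y * (P - R)) ≤ |profileForcing y| * (P - R) := calc
    ε * (profileForcing y * (P - R)) ≤ |ε * (profileForcing y * (P - R))| := le_abs_self _
    _ = |profileForcing y| * (P - R) := by
      rw [abs_mul, hε, one_mul, abs_mul, abs_of_nonneg (sub_nonneg.2 hRP)]
  linear_combination hremainder + q ^ 2 / 4 * hforcing +
    residual_bound hq hq1 hy hy2 hR hRP hP hRy hPR +
    (10 * q ^ 4 * P * profileForcing y + q ^ 3 * profileCorrection (q ^ 2) y) * hεε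

theorem mul_profileResidual_le (hε : |ε| = 1) (hq : 0 < q) (hq1 : q ≤ 1 / 1000)
    (hψ : -1 < cos ψ) :
    ε * profileResidual (q ^ 2) (ε * (40 * q ^ 2)) (ε * q ^ 3) (cos ψ) ≤
      30 * q ^ 3 * sin ψ ^ 2 * √(profileRadicand (q ^ 2) (cos ψ)) -
        3 * q ^ 4 * √(profileRadicand (q ^ 2) (cos ψ)) - 2 * q ^ 7 * (1 - cos ψ) ^ 2 := by
  have hs : 0 < q ^ 2 := by positivity
  have hs1 : q ^ 2 ≤ 1 / 1000 := by nlinarith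
  have hψ1 := cos_le_one ψ
  have hy : 0 ≤ 1 - cos ψ := sub_nonneg.2 hψ1
  have hy2 : 1 - cos ψ ≤ 2 := by linarith
  have hsin : sin ψ ^ 2 = (1 - cos ψ) * (2 - (1 - cos ψ)) := by rw [sin_sq]; ring
  have hcofactor := profileCofactor_pos hs (by linarith) hy
  have hT := profileRadicand_pos hs (by linarith) hψ hψ1
  have hTP : 1 - (1 - q ^ 2) * cos ψ ^ 2 =
      profileRadicand (q ^ 2) (cos ψ) + q ^ 2 / 8 * (1 - cos ψ) ^ 3 := by
    unfold profileRadicand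
    ring
  have hgap : 0 ≤ q ^ 2 / 8 * (1 - cos ψ) ^ 3 := by positivity
  rw [hsin]
  refine mul_residual_le hε hq hq1 hy hy2 (Real.sqrt_pos.2 hT) (Real.sqrt_le_sqrt (by linarith))
    (Real.sqrt_le_one.2 (by nlinarith [sq_nonneg (cos ψ)])) ?_ ?_ ?_
  · rw [Real.sq_sqrt hT.le, ← hsin, sin_sq]
    exact le_profileRadicand hs.le (by linarith) hψ.le hψ1
  · rw [Real.sq_sqrt hT.le, Real.sq_sqrt (by linarith), hTP]
  · rw [abs_div, abs_of_pos (pow_pos hcofactor 2), div_le_iff₀ (pow_pos hcofactor 2)]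
    exact (abs_profileRemainder_le hs.le hs1 hy hy2).trans_eq (by ring)

theorem abs_profileKernel_div_sqrt_le (hq : 0 < q) (hq1 : q ≤ 1) (t : ℝ) :
    |profileKernel (q ^ 2) (cos t) / √(1 - (1 - q ^ 2) * cos t ^ 2)| ≤ q / 2 := by
  have hroot : q ≤ √(1 - (1 - q ^ 2) * cos t ^ 2) := by
    refine Real.le_sqrt_of_sq_le ?_
    have hq2 : q ^ 2 ≤ 1 := pow_le_one₀ hq.le hq1
    linarith [mul_nonneg (sub_nonneg.2 hq2) (sub_nonneg.2 (cos_sq_le_one t))]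
  have hx := neg_one_le_cos t
  have hx1 := cos_le_one t
  have hnonneg : 0 ≤ (5 - cos t) * (1 + cos t) := mul_nonneg (by linarith) (by linarith)
  have hle : (5 - cos t) * (1 + cos t) ≤ 8 := by nlinarith
  rw [profileKernel, abs_div, abs_mul, abs_neg, abs_of_nonneg hnonneg, abs_of_pos (by positivity),
    abs_of_pos (hq.trans_le hroot)]
  calc q ^ 2 / 16 * ((5 - cos t) * (1 + cos t)) / √(1 - (1 - q ^ 2) * cos t ^ 2)
      ≤ q ^ 2 / 16 * 8 / q := by gcongr
    _ = q / 2 := by field_simp; norm_num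

theorem abs_integral_profileKernel_le (hq : 0 < q) (hq1 : q ≤ 1) (hψ : ψ ∈ Icc (-π) π) :
    |∫ t in 0..ψ, profileKernel (q ^ 2) (cos t) / √(1 - (1 - q ^ 2) * cos t ^ 2)| ≤
      8 / 5 * q := by
  have h := intervalIntegral.norm_integral_le_of_norm_le_const (a := 0) (b := ψ)
    (f := fun t => profileKernel (q ^ 2) (cos t) / √(1 - (1 - q ^ 2) * cos t ^ 2))
    fun t _ => abs_profileKernel_div_sqrt_le hq hq1 t
  rw [Real.norm_eq_abs, sub_zero] at h
  have hψ' : |ψ| ≤ 3.15 := (abs_le.2 hψ).trans pi_lt_d2.le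
  nlinarith

theorem abs_profile_sub_le (hq : 0 < q) (hq1 : q ≤ 1 / 1000) (hκ : |κ| ≤ 1 / 1000) (a : ℝ)
    (hψ : ψ ∈ Icc (-π) π) :
    |profile (q ^ 2) κ a ψ - (√(profileRadicand (q ^ 2) (cos ψ)) + a * (1 - cos ψ) ^ 2)| ≤
      17 / 10 * q * √(profileRadicand (q ^ 2) (cos ψ)) := by
  have hsin : |sin ψ| ≤ 101 / 100 * √(profileRadicand (q ^ 2) (cos ψ)) := by
    have h := le_profileRadicand (sq_nonneg q) (by nlinarith) (neg_one_le_cos ψ) (cos_le_one ψ)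
    rw [← sin_sq] at h
    refine abs_le_of_sq_le_sq ?_ (by positivity)
    rw [mul_pow, Real.sq_sqrt (by linarith [sq_nonneg (sin ψ)])]
    linarith [sq_nonneg (sin ψ)]
  have hκ1 : |1 + κ| ≤ 1001 / 1000 := by
    refine (abs_add_le _ _).trans ?_
    rw [abs_one]
    linarith
  have hintegral := abs_integral_profileKernel_le hq (by linarith) hψ
  have hR := Real.sqrt_nonneg (profileRadicand (q ^ 2) (cos ψ))
  rw [profile, add_sub_add_right_eq_sub, add_sub_cancel_left, abs_mul, abs_mul]
  calc _ ≤ 1001 / 1000 * (101 / 100 * √(profileRadicand (q ^ 2) (cos ψ)) * (8 / 5 * q)) := by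
        gcongr
    _ ≤ 17 / 10 * q * √(profileRadicand (q ^ 2) (cos ψ)) := by linarith [mul_nonneg hq.le hR]

/- Here `R`, `E`, `σ` and `Y` stand for the square root in the profile `B`, its residual,
`sin ψ ^ 2` and `(1 - cos ψ) ^ 2`. -/
theorem mul_residual_sub_le {R B E σ Y : ℝ} (hε : |ε| = 1) (hq : 0 < q) (hq1 : q ≤ 1 / 1000)
    (hR : 0 ≤ R) (hσ : 0 ≤ σ) (hY : 0 ≤ Y) (hB : |B - (R + ε * q ^ 3 * Y)| ≤ 17 / 10 * q * R)
    (hE : ε * E ≤ 30 * q ^ 3 * σ * R - 3 * q ^ 4 * R - 2 * q ^ 7 * Y) :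
    ε * (3 / 4 * q ^ 2 * σ * R + E -
      (3 / 4 * q ^ 2 + ε * (40 * q ^ 3)) * (1 - q ^ 2) * σ * B) ≤ -(2 * q ^ 4 * B) := by
  set k := (3 / 4 + ε * (40 * q)) * (1 - q ^ 2) with hk
  obtain ⟨hB1, hB2⟩ := abs_le.1 hB
  have hq3Y : 0 ≤ q ^ 3 * Y := by positivity
  have hq2 : q ^ 2 ≤ q / 1000 := by nlinarith
  have hεpm := eq_or_eq_neg_of_abs_eq hε
  have hBle : B ≤ (1 + 17 / 10 * q) * R + q ^ 3 * Y := by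
    rcases hεpm with rfl | rfl <;> linarith
  have hεB : (ε - 17 / 10 * q) * R ≤ ε * B := by
    rcases hεpm with rfl | rfl <;> linarith
  have hk0 : 0 ≤ k := by
    refine mul_nonneg ?_ (by linarith)
    rcases hεpm with rfl | rfl <;> linarith
  have hkε : 3 / 4 * ε + 30 * q ≤ k * (ε - 17 / 10 * q) := by
    rcases hεpm with rfl | rfl <;> rw [hk] <;> nlinarith
  have hmain := mul_le_mul_of_nonneg_left hεB (mul_nonneg (sq_nonneg q) (mul_nonneg hk0 hσ))
  have hcoeff := mul_le_mul_of_nonneg_right hkε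
    (mul_nonneg (sq_nonneg q) (mul_nonneg hσ hR))
  have hloss := mul_le_mul_of_nonneg_left hBle (pow_nonneg hq.le 4)
  have hqR : 17 / 5 * q * (q ^ 4 * R) ≤ 1 * (q ^ 4 * R) := by gcongr; linarith
  linear_combination hE + hmain + hcoeff + 2 * hloss + hqR

theorem neg_one_lt_cos_of_mem_Ioo (hψ : ψ ∈ Ioo (-π) π) : -1 < cos ψ := by
  rw [← cos_abs ψ, ← cos_pi]
  exact cos_lt_cos_of_nonneg_of_le_pi (abs_nonneg ψ) le_rfl (abs_lt.2 hψ)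

theorem exists_hasConalOpAt_profile (hε : |ε| = 1) (hq : 0 < q) (hq1 : q ≤ 1 / 1000)
    (hψ : ψ ∈ Ioo (-π) π) :
    ∃ b, HasConalOpAt (1 - q ^ 2) (profile (q ^ 2) (ε * (40 * q ^ 2)) (ε * q ^ 3)) b ψ ∧
      ε * (b - (1 - 2 * q ^ 2 -
          (2 - (3 / 4 * q ^ 2 + ε * (40 * q ^ 3))) * (1 - q ^ 2) * sin ψ ^ 2) *
            profile (q ^ 2) (ε * (40 * q ^ 2)) (ε * q ^ 3) ψ) ≤
        -(2 * q ^ 4 * profile (q ^ 2) (ε * (40 * q ^ 2)) (ε * q ^ 3) ψ) := by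
  have hs1 : q ^ 2 ≤ 1 / 1000000 := by nlinarith
  have hκ : |ε * (40 * q ^ 2)| ≤ 1 / 1000 := by
    rw [abs_mul, hε, one_mul, abs_of_pos (by positivity)]
    linarith
  have hψ' := neg_one_lt_cos_of_mem_Ioo hψ
  refine ⟨_, hasConalOpAt_profile (by positivity) (by linarith) _ _ hψ', ?_⟩
  linear_combination mul_residual_sub_le hε hq hq1 (Real.sqrt_nonneg _) (sq_nonneg (sin ψ))
    (sq_nonneg (1 - cos ψ)) (abs_profile_sub_le hq hq1 hκ _ (Ioo_subset_Icc_self hψ))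
    (mul_profileResidual_le hε hq hq1 hψ')

theorem profile_pos {a : ℝ} (hq : 0 < q) (hq1 : q ≤ 1 / 1000) (hκ : |κ| ≤ 1 / 1000) (ha : 0 < a)
    (hψ : ψ ∈ Icc (-π) π) : 0 < profile (q ^ 2) κ a ψ := by
  have h := (abs_le.1 (abs_profile_sub_le hq hq1 hκ a hψ)).1
  have hR := Real.sqrt_nonneg (profileRadicand (q ^ 2) (cos ψ))
  have hqR := mul_le_mul_of_nonneg_right hq1 hR
  rcases (cos_le_one ψ).eq_or_lt with hx | hx
  · have hT : profileRadicand (q ^ 2) (cos ψ) = q ^ 2 := by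
      rw [hx]
      unfold profileRadicand
      ring
    rw [hT, Real.sqrt_sq hq.le, hx] at h
    nlinarith
  · have : 0 < a * (1 - cos ψ) ^ 2 := mul_pos ha (pow_pos (sub_pos.2 hx) 2)
    linarith

theorem ConalEigenfunction.two_sub_le {lam : ℝ} {f : ℝ → ℝ → ℝ} (hq : 0 < q) (hq1 : q ≤ 1 / 1000)
    (hf : ConalEigenfunction (q ^ 2) (1 - q ^ 2) lam f) :
    2 - (3 / 4 * q ^ 2 + 40 * q ^ 3) ≤ lam := by
  have hs : 0 < q ^ 2 := by positivity
  have hs1 : q ^ 2 ≤ 1 / 1000000 := by nlinarith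
  have hκ : |40 * q ^ 2| ≤ 1 / 1000 := by
    rw [abs_of_pos (by positivity)]
    linarith
  refine hf.le_of_supersolution (σ₀ := 2 * q ^ 4) hs (by linarith) (by ring)
    (by linarith [pow_pos hq 3]) (by positivity) (continuous_profile hs (40 * q ^ 2) (q ^ 3))
    (fun ψ hψ => profile_pos hq hq1 hκ (pow_pos hq 3) hψ) fun ψ hψ => ?_
  obtain ⟨b, hb, hle⟩ := exists_hasConalOpAt_profile abs_one hq hq1 hψ
  simp only [one_mul] at hb hle
  exact ⟨b, by linarith, hb⟩

theorem ConalEigenfunction.le_two_sub {lam : ℝ} {f : ℝ → ℝ → ℝ} (hq : 0 < q) (hq1 : q ≤ 1 / 1000)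
    (hf : ConalEigenfunction (q ^ 2) (1 - q ^ 2) lam f) :
    lam ≤ 2 - (3 / 4 * q ^ 2 - 40 * q ^ 3) := by
  have hs : 0 < q ^ 2 := by positivity
  have hs1 : q ^ 2 ≤ 1 / 1000000 := by nlinarith
  have hq3 := pow_pos hq 3
  refine hf.le_of_subsolution (σ₀ := q ^ 4) hs (by linarith) (by ring)
    (by nlinarith [mul_pos hs hq]) (by positivity)
    (continuous_profile hs (-1 * (40 * q ^ 2)) (-1 * q ^ 3)) (fun ψ hψ => ?_)
    (by simpa [profile, profileRadicand] using hs) fun ψ hψ hB => ?_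
  · have hsin : sin ψ = 0 := by rw [← sq_eq_zero_iff, sin_sq, hψ]; norm_num
    have hT : profileRadicand (q ^ 2) (-1) = 0 := by unfold profileRadicand; ring
    rw [profile, hψ, hsin, hT, Real.sqrt_zero]
    linarith
  · obtain ⟨b, hb, hle⟩ := exists_hasConalOpAt_profile (ε := -1) (by simp) hq hq1 hψ
    refine ⟨b, ?_, hb⟩
    have : 0 ≤ (1 / 4 * q ^ 4 + 40 * q ^ 5) *
      profile (q ^ 2) (-1 * (40 * q ^ 2)) (-1 * q ^ 3) ψ := by positivity
    linarith

end Barriers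

section SlitExponent

variable {Θ β : ℝ} {u : Ed 3 → ℝ}

theorem conalEigenfunction_of_harmonic (h0 : 0 < cos Θ) (hs : sin Θ ≠ 0) (hcont : Continuous u)
    (hpos : ∀ x ∈ slitV Θ, 0 < u x) (hzero : ∀ x, x ∉ slitV Θ → u x = 0)
    (hdiff : ContDiffOn ℝ 2 u (slitV Θ)) (hlap : ∀ x ∈ slitV Θ, Δ u x = 0)
    (hhom : ∀ r : ℝ, 0 < r → ∀ x : Ed 3, x ≠ 0 → u (r • x) = r ^ β * u x) :
    ConalEigenfunction (sin Θ ^ 2) (cos Θ ^ 2) (β * (β + 1))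
      fun φ ψ => u (conalPoint (sin Θ ^ 2) (cos Θ ^ 2) φ ψ) where
  continuous := hcont.comp (continuous_conalPoint _ _)
  pos φ hφ ψ hψ := hpos _ (conalPoint_mem_slitV hs hφ hψ)
  eq_zero φ ψ h := hzero _ (conalPoint_notMem_slitV h0.le h)
  equation φ hφ ψ hψ := by
    have hX := conalPoint_mem_slitV hs hφ hψ
    have hsc := sin_sq_add_cos_sq Θ
    have hs2 : 0 < sin Θ ^ 2 := by positivity
    have hc2 : 0 < cos Θ ^ 2 := by positivity
    refine conal_equation hsc (one_sub_mul_cos_sq_pos (by linarith) φ)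
      (one_sub_mul_cos_sq_pos (by linarith) ψ) (conalWeight_pos hs2 hc2.le hφ ψ)
      (hdiff.contDiffAt ((isOpen_slitV Θ).mem_nhds hX)) (hlap _ hX) fun r hr => hhom r hr _ ?_
    intro h
    simp [h, slitV] at hX

theorem abs_sub_le_of_abs_quadratic_le {q z : ℝ} (hq : 0 < q) (hq1 : q ≤ 1 / 1000) (hz : z < 1)
    (h : |z * (3 - z) - 3 / 4 * q ^ 2| ≤ 40 * q ^ 3) : |z - q ^ 2 / 4| ≤ 14 * q ^ 3 := by
  obtain ⟨h1, h2⟩ := abs_le.1 h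
  have hq3 : 40 * q ^ 3 ≤ q ^ 2 / 4 := by
    calc 40 * q ^ 3 = q ^ 2 * (40 * q) := by ring
      _ ≤ q ^ 2 * (1 / 4) := by gcongr; linarith
      _ = q ^ 2 / 4 := by ring
  have hz0 : 0 ≤ z := by
    by_contra! hz0
    nlinarith [sq_nonneg q]
  have hz1 : z ≤ q ^ 2 / 2 := by nlinarith
  have hz2 : z ^ 2 ≤ q ^ 3 := by
    calc z ^ 2 ≤ (q ^ 2 / 2) ^ 2 := by gcongr
      _ = q ^ 3 * (q / 4) := by ring
      _ ≤ q ^ 3 * 1 := by gcongr; linarith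
      _ = q ^ 3 := mul_one _
  have := pow_pos hq 3
  have := sq_nonneg z
  exact abs_le.2 ⟨by linarith, by linarith⟩

theorem ConalEigenfunction.abs_exponent_sub_le {q : ℝ} {f : ℝ → ℝ → ℝ} (hq : 0 < q)
    (hq1 : q ≤ 1 / 1000) (hβ : 0 < β)
    (hf : ConalEigenfunction (q ^ 2) (1 - q ^ 2) (β * (β + 1)) f) :
    |1 - β - q ^ 2 / 4| ≤ 14 * q ^ 3 :=
  abs_sub_le_of_abs_quadratic_le hq hq1 (by linarith)
    (abs_le.2 ⟨by linarith [hf.le_two_sub hq hq1], by linarith [hf.two_sub_le hq hq1]⟩)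

theorem sq_sub_sin_sq_le (hΘ : 0 < Θ) : Θ ^ 2 - sin Θ ^ 2 ≤ Θ ^ 4 / 3 := by
  calc Θ ^ 2 - sin Θ ^ 2 = Θ * (Θ - sin Θ) + (Θ - sin Θ) * sin Θ := by ring
    _ ≤ Θ * (Θ - sin Θ) + (Θ - sin Θ) * Θ := by
      have := sin_le hΘ.le
      have := sub_nonneg.2 this
      gcongr
    _ = 2 * Θ * (Θ - sin Θ) := by ring
    _ ≤ 2 * Θ * (Θ ^ 3 / 6) :=
      mul_le_mul_of_nonneg_left (by linarith [sin_gt_sub_cube hΘ]) (by positivity)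
    _ = Θ ^ 4 / 3 := by ring

theorem slit_plane_exponent_general (hΘ : 0 < Θ) (hΘ1 : Θ ≤ 1 / 1000) (hcont : Continuous u)
    (hnonneg : ∀ x, 0 ≤ u x) (hne : ∃ x, u x ≠ 0) (hzero : ∀ x, x ∉ slitV Θ → u x = 0)
    (hdiff : ContDiffOn ℝ 2 u (slitV Θ)) (hlap : ∀ x ∈ slitV Θ, lapE 3 u x = 0)
    (hhom : ∀ r : ℝ, 0 < r → ∀ x : Ed 3, x ≠ 0 → u (r • x) = r ^ β * u x) :
    |β - 1 + Θ ^ 2 / 4| ≤ 15 * Θ ^ 3 := by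
  obtain ⟨x, hx⟩ := hne
  have hx0 : x ≠ 0 := by
    rintro rfl
    exact hx (hzero 0 (by simp [slitV]))
  simp only [lapE_eq_laplacian] at hlap
  have hΘπ : Θ < π / 2 := by linarith [pi_gt_three]
  have hsin : 0 < sin Θ := sin_pos_of_pos_of_lt_pi hΘ (by linarith)
  have hsinΘ : sin Θ ≤ Θ := sin_le hΘ.le
  have hcos : 0 < cos Θ := cos_pos_of_mem_Ioo ⟨by linarith, hΘπ⟩
  have hcos1 : cos Θ < 1 := by nlinarith [sin_sq_add_cos_sq Θ]
  have hpos : ∀ y ∈ slitV Θ, 0 < u y := fun y => pos_of_superharmonic (isOpen_slitV Θ)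
    (isPreconnected_slitV hcos.le hcos1) hcont hnonneg hdiff (fun x hx => (hlap x hx).le)
    (not_imp_comm.1 (hzero x) hx) ((hnonneg x).lt_of_ne' hx)
  have hβ : 0 < β := homogeneity_exponent_pos hcont.continuousAt (hzero 0 (by simp [slitV])) hx
    fun r hr => hhom r hr x hx0
  have hf := conalEigenfunction_of_harmonic hcos hsin.ne' hcont hpos hzero hdiff hlap hhom
  rw [cos_sq'] at hf
  obtain ⟨hle, hge⟩ := abs_le.1 (hf.abs_exponent_sub_le hsin (hsinΘ.trans hΘ1) hβ)
  have hsin2 : sin Θ ^ 2 ≤ Θ ^ 2 := by gcongr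
  have hsin3 : sin Θ ^ 3 ≤ Θ ^ 3 := by gcongr
  have hsq := sq_sub_sin_sq_le hΘ
  have hΘ4 : Θ ^ 4 / 3 ≤ Θ ^ 3 := by nlinarith [pow_pos hΘ 3]
  exact abs_le.2 ⟨by linarith, by linarith⟩

theorem one_le_abs_log (hΘ : 0 < Θ) (hΘ1 : Θ ≤ 1 / 1000) : 1 ≤ |Real.log Θ| := by
  rw [le_abs', Real.log_le_iff_le_exp hΘ]
  left
  linarith [Real.exp_neg_one_gt_d9]

end SlitExponent

end

/-- homogeneity exponent for the classical Laplacian in the complement of a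
plane slit by a cone. -/
theorem slit_plane_exponent :
    ∃ C : ℝ, 0 < C ∧ ∃ Θ₀ ∈ Set.Ioo (0 : ℝ) π, ∀ Θ ∈ Set.Ioo (0 : ℝ) Θ₀,
      ∀ β : ℝ, ∀ u : Ed 3 → ℝ, Continuous u → (∀ x, 0 ≤ u x) → (∃ x, u x ≠ 0) →
        (∀ x, x ∉ slitV Θ → u x = 0) →
        ContDiffOn ℝ 2 u (slitV Θ) →
        (∀ x ∈ slitV Θ, lapE 3 u x = 0) →
        (∀ r : ℝ, 0 < r → ∀ x : Ed 3, x ≠ 0 → u (r • x) = r ^ β * u x) →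
        |β - 1 + Θ ^ 2 / 4| ≤ C * Θ ^ 3 * |Real.log Θ| := by
  refine ⟨15, by norm_num, 1 / 1000, ⟨by norm_num, by linarith [pi_gt_three]⟩, ?_⟩
  rintro Θ ⟨hΘ, hΘ1⟩ β u hcont hnonneg hne hzero hdiff hlap hhom
  calc |β - 1 + Θ ^ 2 / 4|
      ≤ 15 * Θ ^ 3 :=
        slit_plane_exponent_general hΘ hΘ1.le hcont hnonneg hne hzero hdiff hlap hhom
    _ ≤ 15 * Θ ^ 3 * |Real.log Θ| :=
        le_mul_of_one_le_right (by positivity) (one_le_abs_log hΘ hΘ1.le)
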